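/- Assume condition (Cond1). If u_τ ≡ 0, then, apart from the zero solution, every non-negative strong solution to problem (Incl) has the form u(t) = 0 for τ ≤ t ≤ t₀ and u(t) = u_{t₀}(t) for t ≥ t₀, where t₀ ≥ τ and u_{t₀} is the unique solution of the linear problem ∂u/∂t − ∂²u/∂x² = b(t) + ω(t)u on (t₀,∞)×(0,1) with Dirichlet boundary conditions and u(t₀,·)=0; moreover u(t) is positive for all t > t₀. -/

import Mathlib

open MeasureTheory Set

noncomputable section

/-- Lebesgue measure restricted to the spatial interval `(0,1)`. -/
def μ01 : Measure ℝ := volume.restrict (Ioo (0:ℝ) 1)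

/-- `H = L²(0,1)`. -/
abbrev Hsp : Type := Lp ℝ 2 μ01

/-- The Heaviside multifunction. -/
def heaviside (s : ℝ) : Set ℝ :=
  if s < 0 then {-1} else if s = 0 then Icc (-1) 1 else {1}

/-- Condition (Cond1). -/
structure Cond1 (b ω : ℝ → ℝ) (b0 b1 ω0 ω1 : ℝ) : Prop where
  contb : Continuous b
  contω : Continuous ω
  b0pos : 0 < b0
  blb : ∀ t, b0 ≤ b t
  bub : ∀ t, b t ≤ b1
  ω0nonneg : 0 ≤ ω0
  ωlb : ∀ t, ω0 ≤ ω t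
  ωub : ∀ t, ω t ≤ ω1

/-- `v ∈ H²(0,1) ∩ H¹₀(0,1)` with (weak) second derivative `w ∈ L²(0,1)`:
`v` has a representative that is continuous on `[0,1]`, vanishes at the boundary,
is differentiable on `(0,1)` and whose derivative is an antiderivative of `w`. -/
def InDomainA (v w : Hsp) : Prop :=
  ∃ vt : ℝ → ℝ, ContinuousOn vt (Icc 0 1) ∧ vt 0 = 0 ∧ vt 1 = 0 ∧
    (∀ᵐ x ∂μ01, vt x = v x) ∧
    ∃ g : ℝ → ℝ,
      (∀ x ∈ Ioo (0:ℝ) 1, HasDerivAt vt (g x) x) ∧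
      ∀ x ∈ Ioo (0:ℝ) 1, ∀ y ∈ Ioo (0:ℝ) 1, g x - g y = ∫ z in y..x, w z

/-- A strong solution of the inclusion on `[τ,∞)`, with explicit data:
`r` is the `L²`-selection, `u'` the time derivative, `uxx` the second spatial derivative. -/
structure IsStrongSolutionWith (b ω : ℝ → ℝ) (τ : ℝ) (u r u' uxx : ℝ → Hsp) : Prop where
  cont : ContinuousOn u (Ici τ)
  rmem : ∀ T, τ < T → MemLp r 2 (volume.restrict (Ioo τ T))
  sel : ∀ᵐ t ∂(volume.restrict (Ioi τ)), ∀ᵐ x ∂μ01,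
      ∃ h ∈ heaviside (u t x), r t x = b t * h + ω t * u t x
  dom : ∀ᵐ t ∂(volume.restrict (Ioi τ)), InDomainA (u t) (uxx t)
  eq : ∀ᵐ t ∂(volume.restrict (Ioi τ)), u' t = r t + uxx t
  fund : ∀ T1 T2 : ℝ, τ < T1 → T1 < T2 →
      IntervalIntegrable u' volume T1 T2 ∧
      ∀ t ∈ Icc T1 T2, u t = u T1 + ∫ s in T1..t, u' s

/-- A strong solution of the inclusion on `[τ,∞)`. -/
def IsStrongSolution (b ω : ℝ → ℝ) (τ : ℝ) (u : ℝ → Hsp) : Prop :=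
  ∃ r u' uxx, IsStrongSolutionWith b ω τ u r u' uxx

/-- The solution is non-negative on `[τ,∞)`. -/
def NonnegOn (u : ℝ → Hsp) (τ : ℝ) : Prop :=
  ∀ t, τ ≤ t → ∀ᵐ x ∂μ01, 0 ≤ u t x

/-- `v` is positive: it has a continuous representative on `[0,1]`
which is strictly positive on `(0,1)`. -/
def IsPositive (v : Hsp) : Prop :=
  ∃ vt : ℝ → ℝ, ContinuousOn vt (Icc 0 1) ∧ (∀ᵐ x ∂μ01, vt x = v x) ∧
    ∀ x ∈ Ioo (0:ℝ) 1, 0 < vt x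


/-- A strong solution of the linear problem
`∂u/∂t − ∂²u/∂x² = b(t) + ω(t)u` on `(τ,∞)×(0,1)` with Dirichlet boundary
conditions, with explicit time derivative `u'` and second spatial derivative `uxx`. -/
structure IsLinearSolutionWith (b ω : ℝ → ℝ) (τ : ℝ) (u u' uxx : ℝ → Hsp) : Prop where
  cont : ContinuousOn u (Ici τ)
  dom : ∀ᵐ t ∂(volume.restrict (Ioi τ)), InDomainA (u t) (uxx t)
  eq : ∀ᵐ t ∂(volume.restrict (Ioi τ)), ∀ᵐ x ∂μ01,
      u' t x = b t + ω t * u t x + uxx t x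
  fund : ∀ T1 T2 : ℝ, τ < T1 → T1 < T2 →
      IntervalIntegrable u' volume T1 T2 ∧
      ∀ t ∈ Icc T1 T2, u t = u T1 + ∫ s in T1..t, u' s

/-- A strong solution of the linear problem on `[τ,∞)`. -/
def IsLinearSolution (b ω : ℝ → ℝ) (τ : ℝ) (u : ℝ → Hsp) : Prop :=
  ∃ u' uxx, IsLinearSolutionWith b ω τ u u' uxx

/-!
On the set `{u = 0}` both `∂u/∂t` and `∂²u/∂x²` vanish almost everywhere when `u ≥ 0`, so a
non-negative solution of the inclusion satisfies `∂u/∂t - ∂²u/∂x² = b 1_{u > 0} + ω u`; in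
particular it is a supersolution of a linear heat equation. The strong maximum principle then
propagates positivity: if `u(s) ≠ 0`, then `u(t) > 0` on `(0,1)` for all `t > s`. It is proved by
comparison with an explicit compactly supported subsolution that moves from a point where `u(s)` is
positive to the point where positivity is wanted. Hence, if `t₀` is the last time up to which `u`
vanishes, `u` is positive after `t₀` and solves the linear problem there. Uniqueness for the linear
problem is the weak maximum principle, obtained by a Grönwall argument for the squared norm of the
negative part, and `u(t)` is continuous in `x` because its sine coefficients decay like `k⁻²`.
-/

open Filter Topology
open scoped RealInnerProductSpace

/-! ### Negative parts and signs in `L²` -/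

section L2

variable {α : Type*} {mα : MeasurableSpace α} {μ : Measure α}

lemma real_inner_eq_integral_mul (f g : Lp ℝ 2 μ) : ⟪f, g⟫ = ∫ x, f x * g x ∂μ := by
  simp only [L2.inner_def, RCLike.inner_apply, conj_trivial, mul_comm]

lemma integrable_coeFn_mul (f g : Lp ℝ 2 μ) : Integrable (fun x => f x * g x) μ :=
  (Lp.memLp f).integrable_mul (Lp.memLp g)

lemma norm_sq_eq_integral_mul_self (f : Lp ℝ 2 μ) : ‖f‖ ^ 2 = ∫ x, f x * f x ∂μ := by
  rw [← real_inner_self_eq_norm_sq, real_inner_eq_integral_mul]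

lemma abs_sq_negPart_add_sub_le (p q : ℝ) :
    |max (-(p + q)) 0 * max (-(p + q)) 0 - max (-p) 0 * max (-p) 0 + 2 * (max (-p) 0 * q)|
      ≤ q * q := by
  rw [abs_le]
  rcases max_cases (-p) 0 with ⟨h, hp⟩ | ⟨h, hp⟩ <;>
    rcases max_cases (-(p + q)) 0 with ⟨h', hq⟩ | ⟨h', hq⟩ <;>
    rw [h, h'] <;> constructor <;> nlinarith

lemma abs_norm_sq_negPart_add_sub_le (f h : Lp ℝ 2 μ) :
    |‖Lp.negPart (f + h)‖ ^ 2 - ‖Lp.negPart f‖ ^ 2 + 2 * ⟪Lp.negPart f, h⟫| ≤ ‖h‖ ^ 2 := by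
  have hint := integrable_coeFn_mul (μ := μ)
  have hsq : Integrable (fun x => Lp.negPart (f + h) x * Lp.negPart (f + h) x
      - Lp.negPart f x * Lp.negPart f x) μ := (hint _ _).sub (hint _ _)
  have hlin := (hint (Lp.negPart f) h).const_mul 2
  simp only [norm_sq_eq_integral_mul_self, real_inner_eq_integral_mul]
  rw [← integral_sub (hint _ _) (hint _ _), ← integral_const_mul, ← integral_add hsq hlin]
  refine abs_integral_le_integral_abs.trans
    (integral_mono_ae (hsq.add hlin).abs (hint h h) ?_)
  filter_upwards [Lp.coeFn_negPart_eq_max f, Lp.coeFn_negPart_eq_max (f + h),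
    Lp.coeFn_add f h] with x hf hfh hadd
  simpa only [hf, hfh, hadd, Pi.add_apply] using abs_sq_negPart_add_sub_le (f x) (h x)

lemma hasFDerivAt_norm_sq_negPart (f : Lp ℝ 2 μ) :
    HasFDerivAt (fun g : Lp ℝ 2 μ => ‖Lp.negPart g‖ ^ 2)
      ((-2 : ℝ) • innerSL ℝ (Lp.negPart f)) f := by
  rw [hasFDerivAt_iff_isLittleO_nhds_zero]
  refine Asymptotics.IsBigO.trans_isLittleO (.of_bound 1 (.of_forall fun h => ?_))
    (Asymptotics.isLittleO_norm_pow_id one_lt_two)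
  simpa using abs_norm_sq_negPart_add_sub_le f h

lemma norm_negPart_sub_negPart_le (f g : Lp ℝ 2 μ) :
    ‖Lp.negPart f - Lp.negPart g‖ ≤ ‖f - g‖ := by
  refine Lp.norm_le_norm_of_ae_le ?_
  filter_upwards [Lp.coeFn_negPart_eq_max f, Lp.coeFn_negPart_eq_max g, Lp.coeFn_sub f g,
    Lp.coeFn_sub (Lp.negPart f) (Lp.negPart g)] with x hf hg hfg hneg
  rw [hfg, hneg, Pi.sub_apply, Pi.sub_apply, hf, hg, Real.norm_eq_abs, Real.norm_eq_abs,
    ← abs_neg (f x - g x), neg_sub']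
  exact abs_max_sub_max_le_abs (-f x) (-g x) 0

lemma negPart_eq_zero_iff_nonneg {f : Lp ℝ 2 μ} : Lp.negPart f = 0 ↔ 0 ≤ f := by
  rw [← Lp.coeFn_nonneg, Lp.eq_zero_iff_ae_eq_zero]
  refine eventually_congr ?_
  filter_upwards [Lp.coeFn_negPart_eq_max f] with x hx
  simp [hx]

lemma inner_negPart_self (f : Lp ℝ 2 μ) : ⟪Lp.negPart f, f⟫ = -‖Lp.negPart f‖ ^ 2 := by
  rw [real_inner_eq_integral_mul, norm_sq_eq_integral_mul_self, ← integral_neg]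
  refine integral_congr_ae ?_
  filter_upwards [Lp.coeFn_negPart_eq_max f] with x hx
  rw [hx]
  rcases max_cases (-f x) 0 with ⟨h, -⟩ | ⟨h, -⟩ <;> rw [h] <;> ring

lemma inner_negPart_le_of_neg {f g h : Lp ℝ 2 μ} (hgh : ∀ᵐ x ∂μ, f x < 0 → g x ≤ h x) :
    ⟪Lp.negPart f, g⟫ ≤ ⟪Lp.negPart f, h⟫ := by
  simp only [real_inner_eq_integral_mul]
  refine integral_mono_ae (integrable_coeFn_mul _ _) (integrable_coeFn_mul _ _) ?_
  filter_upwards [hgh, Lp.coeFn_negPart_eq_max f] with x hx hf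
  rw [hf]
  rcases max_cases (-f x) 0 with ⟨hneg, hpos⟩ | ⟨hneg, -⟩ <;> rw [hneg]
  · rcases hpos.eq_or_lt with h0 | h0
    · simp [← h0]
    · gcongr
      exact hx (by linarith)
  · simp

lemma real_inner_nonneg {f g : Lp ℝ 2 μ} (hf : 0 ≤ f) (hg : 0 ≤ g) : 0 ≤ ⟪f, g⟫ := by
  rw [real_inner_eq_integral_mul]
  refine integral_nonneg_of_ae ?_
  filter_upwards [(Lp.coeFn_nonneg f).2 hf, (Lp.coeFn_nonneg g).2 hg] with x hx hx'
  exact mul_nonneg hx hx'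

lemma ae_le_zero_on_of_inner_le_zero {d : Lp ℝ 2 μ} {Z : Set α} (hZ : MeasurableSet Z)
    (h : ∀ φ : Lp ℝ 2 μ, 0 ≤ φ → (∀ᵐ x ∂μ, x ∉ Z → φ x = 0) → ⟪φ, d⟫ ≤ 0) :
    ∀ᵐ x ∂μ, x ∈ Z → d x ≤ 0 := by
  have hmem : MemLp (Z.indicator fun x => max (d x) 0) 2 μ :=
    ((Lp.memLp d).sup MemLp.zero).indicator hZ
  set φ : Lp ℝ 2 μ := hmem.toLp _
  have hφ : ∀ᵐ x ∂μ, φ x = Z.indicator (fun x => max (d x) 0) x := hmem.coeFn_toLp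
  have hφ_nonneg : 0 ≤ φ := by
    rw [← Lp.coeFn_nonneg]
    filter_upwards [hφ] with x hx
    rw [hx]
    exact indicator_nonneg (fun _ _ => le_max_right _ _) x
  have hφ_sq : ‖φ‖ ^ 2 = ⟪φ, d⟫ := by
    rw [norm_sq_eq_integral_mul_self, real_inner_eq_integral_mul]
    refine integral_congr_ae ?_
    filter_upwards [hφ] with x hx
    rw [hx]
    by_cases hxZ : x ∈ Z
    · rw [indicator_of_mem hxZ]
      rcases max_cases (d x) 0 with ⟨hd, -⟩ | ⟨hd, -⟩ <;> simp [hd]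
    · simp [hxZ]
  have hφ_zero : φ = 0 := by
    have := h φ hφ_nonneg (hφ.mono fun x hx hxZ => by rw [hx, indicator_of_notMem hxZ])
    simpa using (hφ_sq.le.trans this).antisymm (sq_nonneg _)
  filter_upwards [hφ, (Lp.eq_zero_iff_ae_eq_zero).1 hφ_zero] with x hx hx0 hxZ
  rw [hx0, indicator_of_mem hxZ] at hx
  exact (le_max_left _ _).trans hx.symm.le

lemma inner_eq_zero_of_hasDerivAt_of_nonneg {u : ℝ → Lp ℝ 2 μ} {d φ : Lp ℝ 2 μ} {t : ℝ}
    (hd : HasDerivAt u d t) (hu : ∀ᶠ s in 𝓝 t, 0 ≤ u s) (hφ : 0 ≤ φ)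
    (hφu : ∀ᵐ x ∂μ, u t x ≠ 0 → φ x = 0) : ⟪φ, d⟫ = 0 := by
  have hzero : ⟪φ, u t⟫ = 0 := by
    rw [real_inner_eq_integral_mul]
    refine integral_eq_zero_of_ae (hφu.mono fun x hx => ?_)
    simpa [or_iff_not_imp_right] using hx
  have hmin : IsLocalMin (fun s => ⟪φ, u s⟫) t := by
    filter_upwards [hu] with s hs
    simpa only [hzero] using real_inner_nonneg hφ hs
  exact hmin.hasDerivAt_eq_zero (by simpa using (hasDerivAt_const t φ).inner ℝ hd)

lemma ae_eq_zero_of_hasDerivAt_of_nonneg {u : ℝ → Lp ℝ 2 μ} {d : Lp ℝ 2 μ} {t : ℝ}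
    (hd : HasDerivAt u d t) (hu : ∀ᶠ s in 𝓝 t, 0 ≤ u s) :
    ∀ᵐ x ∂μ, u t x = 0 → d x = 0 := by
  have hZ : MeasurableSet {x | u t x = 0} :=
    (Lp.stronglyMeasurable _).measurable (measurableSet_singleton 0)
  have hle : ∀ᵐ x ∂μ, u t x = 0 → d x ≤ 0 := ae_le_zero_on_of_inner_le_zero hZ fun φ hφ hφu =>
    (inner_eq_zero_of_hasDerivAt_of_nonneg hd hu hφ hφu).le
  have hge : ∀ᵐ x ∂μ, u t x = 0 → (-d : Lp ℝ 2 μ) x ≤ 0 :=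
    ae_le_zero_on_of_inner_le_zero hZ fun φ hφ hφu => by
      rw [inner_neg_right, inner_eq_zero_of_hasDerivAt_of_nonneg hd hu hφ hφu, neg_zero]
  filter_upwards [hle, hge, Lp.coeFn_neg d] with x h1 h2 hneg hx
  rw [hneg, Pi.neg_apply] at h2
  linarith [h1 hx, h2 hx]

end L2

/-! ### Absolutely continuous functions and almost everywhere inequalities -/

section RealAnalysis

lemma absolutelyContinuousOnInterval_of_dist_le {X Y : Type*} [PseudoMetricSpace X]
    [PseudoMetricSpace Y] {f : ℝ → X} {g : ℝ → Y} {a b C : ℝ}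
    (hg : AbsolutelyContinuousOnInterval g a b)
    (hfg : ∀ x ∈ uIcc a b, ∀ y ∈ uIcc a b, dist (f x) (f y) ≤ C * dist (g x) (g y)) :
    AbsolutelyContinuousOnInterval f a b := by
  have hg' : Tendsto (fun E : ℕ × (ℕ → ℝ × ℝ) =>
      C * ∑ i ∈ Finset.range E.1, dist (g (E.2 i).1) (g (E.2 i).2))
      (AbsolutelyContinuousOnInterval.totalLengthFilter ⊓
        𝓟 (AbsolutelyContinuousOnInterval.disjWithin a b)) (𝓝 0) := by
    simpa using Tendsto.const_mul C hg
  refine squeeze_zero' (.of_forall fun E => by positivity) ?_ hg'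
  filter_upwards [mem_inf_of_right (mem_principal_self _)] with E hE
  rw [Finset.mul_sum]
  exact Finset.sum_le_sum fun i hi => hfg _ (hE.1 i hi).1 _ (hE.1 i hi).2

lemma absolutelyContinuousOnInterval_integral {E : Type*} [NormedAddCommGroup E]
    [NormedSpace ℝ E] {f : ℝ → E} {a b : ℝ} (hf : IntervalIntegrable f volume a b) :
    AbsolutelyContinuousOnInterval (fun x => ∫ t in a..x, f t) a b := by
  refine absolutelyContinuousOnInterval_of_dist_le (C := 1)
    (hf.norm.absolutelyContinuousOnInterval_intervalIntegral left_mem_uIcc) fun x hx y hy => ?_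
  have hsub : ∀ z ∈ uIcc a b, IntervalIntegrable f volume a z := fun z hz =>
    hf.mono_set (uIcc_subset_uIcc_left hz)
  rw [dist_eq_norm, dist_eq_norm, one_mul, Real.norm_eq_abs,
    intervalIntegral.integral_interval_sub_left (hsub x hx) (hsub y hy),
    intervalIntegral.integral_interval_sub_left (hsub x hx).norm (hsub y hy).norm]
  exact intervalIntegral.norm_integral_le_abs_integral_norm

lemma absolutelyContinuousOnInterval_of_bound_deriv {f f' : ℝ → ℝ} {a b C : ℝ} (hab : a < b)
    (hf : ContinuousOn f (Icc a b)) (hf' : ∀ x ∈ Ioo a b, HasDerivAt f (f' x) x)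
    (hC : ∀ x ∈ Ioo a b, |f' x| ≤ C) : AbsolutelyContinuousOnInterval f a b := by
  have hlip : LipschitzOnWith C.toNNReal f (Ioo a b) :=
    (convex_Ioo a b).lipschitzOnWith_of_nnnorm_hasDerivWithin_le
      (fun x hx => (hf' x hx).hasDerivWithinAt) fun x hx => by
        rw [← NNReal.coe_le_coe, coe_nnnorm]
        exact (hC x hx).trans (Real.le_coe_toNNReal C)
  rw [← closure_Ioo hab.ne] at hf
  rw [← lipschitzOnWith_closure_iff hf, closure_Ioo hab.ne, ← uIcc_of_le hab.le] at hlip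
  exact hlip.absolutelyContinuousOnInterval

/-- Grönwall's inequality for absolutely continuous functions: `exp (-K t) * N t` decreases. -/
lemma le_exp_mul_of_ae_deriv_le {N : ℝ → ℝ} {a b K : ℝ} (hab : a ≤ b)
    (hN : AbsolutelyContinuousOnInterval N a b)
    (hN' : ∀ᵐ t ∂volume.restrict (Ioo a b), deriv N t ≤ K * N t) :
    N b ≤ Real.exp (K * (b - a)) * N a := by
  set e : ℝ → ℝ := fun t => Real.exp (-K * t)
  have he : ∀ t, HasDerivAt e (-K * e t) t := fun t => by
    simpa [e, mul_comm] using ((hasDerivAt_id t).const_mul (-K)).exp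
  have hAC : AbsolutelyContinuousOnInterval (fun t => e t * N t) a b :=
    AbsolutelyContinuousOnInterval.fun_mul (ContDiffOn.absolutelyContinuousOnInterval
      (by fun_prop)) hN
  have hderiv : ∀ᵐ t ∂volume.restrict (Ioo a b), deriv (fun t => e t * N t) t ≤ 0 := by
    rw [ae_restrict_iff' measurableSet_Ioo] at hN' ⊢
    filter_upwards [hN', hN.ae_differentiableAt] with t ht hdiff htab
    have htI : t ∈ uIcc a b := by
      rw [uIcc_of_le hab]
      exact Ioo_subset_Icc_self htab
    rw [((he t).fun_mul (hdiff htI).hasDerivAt).deriv]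
    linarith [mul_le_mul_of_nonneg_left (ht htab) (Real.exp_pos (-K * t)).le]
  have hle : e b * N b - e a * N a ≤ 0 := by
    rw [← hAC.integral_deriv_eq_sub, intervalIntegral.integral_of_le hab,
      integral_Ioc_eq_integral_Ioo]
    exact integral_nonpos_of_ae hderiv
  have hexp : Real.exp (K * (b - a)) * N a = e a * N a / e b := by
    simp only [e, div_eq_mul_inv, ← Real.exp_neg]
    rw [mul_right_comm, ← Real.exp_add]
    ring_nf
  rw [hexp, le_div_iff₀ (Real.exp_pos _), mul_comm]
  linarith

lemma ae_deriv_eq_zero_of_eq_const {F : Type*} [NormedAddCommGroup F] [NormedSpace ℝ F]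
    (f : ℝ → F) (c : F) : ∀ᵐ x, f x = c → deriv f x = 0 := by
  have hcount : {x | f x = c ∧ deriv f x ≠ 0}.Countable := by
    refine (countable_setOfPred_isolated_right_within
      (s := {x | f x = c ∧ deriv f x ≠ 0})).mono ?_
    rintro x ⟨hx, hx'⟩
    refine ⟨⟨hx, hx'⟩, ?_⟩
    have hne := (differentiableAt_of_deriv_ne_zero hx').hasDerivAt.eventually_ne (c := c) hx'
    refine empty_mem_iff_bot.1 ?_
    filter_upwards [nhdsWithin_mono x (fun z hz => (mem_Ioi.1 hz.2).ne') hne,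
      self_mem_nhdsWithin] with z hz hzc
    exact hz hzc.1.1
  filter_upwards [hcount.ae_notMem volume] with x hx hxc
  by_contra hne
  exact hx ⟨hxc, hne⟩

lemma le_of_ae_le_of_continuousOn {X : Type*} [TopologicalSpace X] [MeasurableSpace X]
    {μ : Measure X} [μ.IsOpenPosMeasure] {U : Set X} (hU : IsOpen U) {f g : X → ℝ}
    (hf : ContinuousOn f U) (hg : ContinuousOn g U) (hfg : ∀ᵐ x ∂μ.restrict U, f x ≤ g x) :
    ∀ x ∈ U, f x ≤ g x := fun _ hx =>
  left_eq_inf.1 (Measure.eqOn_open_of_ae_eq (hfg.mono fun _ h => left_eq_inf.2 h) hU hf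
    (hf.inf hg) hx)

lemma ae_restrict_Ioi_of_forall_Ioo {τ : ℝ} {p : ℝ → Prop}
    (h : ∀ a b, τ < a → a < b → ∀ᵐ t, t ∈ Ioo a b → p t) :
    ∀ᵐ t ∂volume.restrict (Ioi τ), p t := by
  rw [ae_restrict_iff' measurableSet_Ioi]
  have hrat : ∀ᵐ t, ∀ q r : ℚ, τ < q → (q : ℝ) < r → t ∈ Ioo (q : ℝ) r → p t := by
    simp only [ae_all_iff]
    exact fun q r => h q r
  filter_upwards [hrat] with t ht (hτt : τ < t)
  obtain ⟨q, hτq, hqt⟩ := exists_rat_btwn hτt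
  obtain ⟨r, htr, -⟩ := exists_rat_btwn (lt_add_one t)
  exact ht q r hτq (hqt.trans htr) ⟨hqt, htr⟩

end RealAnalysis

/-! ### Continuous functions as elements of `L²(0,1)` -/

lemma ae_μ01_iff {p : ℝ → Prop} : (∀ᵐ x ∂μ01, p x) ↔ ∀ᵐ x, x ∈ Ioo (0 : ℝ) 1 → p x :=
  ae_restrict_iff' measurableSet_Ioo

lemma ae_μ01_mem_Ioo : ∀ᵐ x ∂μ01, x ∈ Ioo (0 : ℝ) 1 :=
  ae_restrict_mem measurableSet_Ioo

instance : IsProbabilityMeasure μ01 := ⟨by simp [μ01]⟩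

lemma integral_μ01 (f : ℝ → ℝ) : ∫ x, f x ∂μ01 = ∫ x in (0 : ℝ)..1, f x := by
  rw [intervalIntegral.integral_of_le zero_le_one, integral_Ioc_eq_integral_Ioo, μ01]

lemma memLp_two_continuousMap (φ : C(ℝ, ℝ)) : MemLp φ 2 μ01 := by
  obtain ⟨C, hC⟩ := (isCompact_Icc (a := (0 : ℝ)) (b := 1)).exists_bound_of_continuousOn
    φ.continuous.continuousOn
  exact .of_bound φ.continuous.aestronglyMeasurable C
    (ae_μ01_mem_Ioo.mono fun x hx => hC x (Ioo_subset_Icc_self hx))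

lemma norm_toLp_le_of_bound {φ : ℝ → ℝ} (hφ : MemLp φ 2 μ01) {C : ℝ} (hC : 0 ≤ C)
    (h : ∀ x ∈ Icc (0 : ℝ) 1, |φ x| ≤ C) : ‖hφ.toLp φ‖ ≤ C := by
  have hbound : ∀ᵐ x ∂μ01, ‖hφ.toLp φ x‖ ≤ C := by
    filter_upwards [hφ.coeFn_toLp, ae_μ01_mem_Ioo] with x hx hx01
    rw [hx]
    exact h x (Ioo_subset_Icc_self hx01)
  simpa [measureUnivNNReal] using Lp.norm_le_of_ae_bound hC hbound

lemma eventually_forall_Icc_abs_lt {X : Type*} [TopologicalSpace X] {Φ : X → C(ℝ, ℝ)} {x₀ : X}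
    (hΦ : ContinuousAt Φ x₀) (h0 : Φ x₀ = 0) {ε : ℝ} (hε : 0 < ε) :
    ∀ᶠ x in 𝓝 x₀, ∀ y ∈ Icc (0 : ℝ) 1, |Φ x y| < ε := by
  rw [ContinuousAt, h0] at hΦ
  filter_upwards [hΦ.eventually (ContinuousMap.eventually_mapsTo isCompact_Icc
    (Metric.isOpen_ball (x := (0 : ℝ)) (ε := ε)) fun _ _ => by simpa using hε)] with x hx y hy
  simpa using hx hy

/-- The inclusion of the continuous functions, with the topology of locally uniform convergence,
into `L²(0,1)`. -/
def toL2 : C(ℝ, ℝ) →L[ℝ] Hsp where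
  toFun φ := (memLp_two_continuousMap φ).toLp φ
  map_add' _ _ := rfl
  map_smul' _ _ := rfl
  cont := by
    refine continuous_of_continuousAt_zero
      (AddMonoidHom.mk' (fun φ : C(ℝ, ℝ) => (memLp_two_continuousMap φ).toLp φ)
        fun _ _ => rfl) (Metric.tendsto_nhds.2 fun ε hε => ?_)
    filter_upwards [eventually_forall_Icc_abs_lt continuousAt_id rfl (half_pos hε)] with φ hφ
    rw [map_zero, dist_zero_right]
    exact (norm_toLp_le_of_bound (memLp_two_continuousMap φ) (half_pos hε).le
      fun x hx => (hφ x hx).le).trans_lt (half_lt_self hε)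

lemma coeFn_toL2 (φ : C(ℝ, ℝ)) : ∀ᵐ x ∂μ01, toL2 φ x = φ x :=
  (memLp_two_continuousMap φ).coeFn_toLp

lemma norm_toL2_le {φ : C(ℝ, ℝ)} {C : ℝ} (hC : 0 ≤ C) (h : ∀ x ∈ Icc (0 : ℝ) 1, |φ x| ≤ C) :
    ‖toL2 φ‖ ≤ C :=
  norm_toLp_le_of_bound (memLp_two_continuousMap φ) hC h

lemma inner_toL2 (φ : C(ℝ, ℝ)) (v : Hsp) : ⟪toL2 φ, v⟫ = ∫ x, φ x * v x ∂μ01 := by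
  rw [real_inner_eq_integral_mul]
  exact integral_congr_ae ((coeFn_toL2 φ).mono fun x hx => by simp only [hx])

lemma continuous_toL2_curry (F : C(ℝ × ℝ, ℝ)) : Continuous fun t => toL2 (F.curry t) :=
  toL2.continuous.comp F.curry.continuous

lemma hasDerivAt_toL2_curry {F F' : C(ℝ × ℝ, ℝ)}
    (hF : ∀ t x, HasDerivAt (fun t => F (t, x)) (F' (t, x)) t) (t₀ : ℝ) :
    HasDerivAt (fun t => toL2 (F.curry t)) (toL2 (F'.curry t₀)) t₀ := by
  rw [hasDerivAt_iff_isLittleO, Asymptotics.isLittleO_iff]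
  intro ε hε
  have hF'ε : ∀ᶠ t in 𝓝 t₀, ∀ x ∈ Icc (0 : ℝ) 1, |(F'.curry t - F'.curry t₀) x| < ε :=
    eventually_forall_Icc_abs_lt (Φ := fun t => F'.curry t - F'.curry t₀) (by fun_prop)
      (sub_self _) hε
  obtain ⟨δ, hδ, hball⟩ := Metric.eventually_nhds_iff_ball.1 hF'ε
  filter_upwards [Metric.ball_mem_nhds t₀ hδ] with t ht
  rw [← map_smul, ← map_sub, ← map_sub]
  refine norm_toL2_le (by positivity) fun x hx => ?_
  have hderiv : ∀ s ∈ Metric.ball t₀ δ, HasDerivWithinAt (fun s => F (s, x) - s * F' (t₀, x))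
      (F' (s, x) - F' (t₀, x)) (Metric.ball t₀ δ) s := fun s _ =>
    ((hF s x).sub (by simpa using (hasDerivAt_id s).mul_const (F' (t₀, x)))).hasDerivWithinAt
  have hmvt := (convex_ball t₀ δ).norm_image_sub_le_of_norm_hasDerivWithin_le hderiv
    (fun s hs => (hball s hs x hx).le) (Metric.mem_ball_self hδ) ht
  rw [Real.norm_eq_abs] at hmvt
  convert hmvt using 2
  simp only [ContinuousMap.sub_apply, ContinuousMap.smul_apply, ContinuousMap.curry_apply,
    smul_eq_mul]
  ring

/-! ### The Dirichlet Laplacian -/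

lemma intervalIntegrable_coeFn (w : Hsp) {a b : ℝ} (ha : a ∈ Icc (0 : ℝ) 1)
    (hb : b ∈ Icc (0 : ℝ) 1) : IntervalIntegrable w volume a b := by
  have hw : IntervalIntegrable w volume 0 1 := by
    rw [intervalIntegrable_iff_integrableOn_Ioo_of_le zero_le_one]
    exact (Lp.memLp w).integrable one_le_two
  rw [← uIcc_of_le zero_le_one] at ha hb
  exact hw.mono_set (uIcc_subset_uIcc ha hb)

/-- `f` is the continuous representative of `v ∈ H²(0,1) ∩ H¹₀(0,1)`, `g` is its first derivative
and `w` its second one. Both `f` and `g` are absolutely continuous, so that integration by parts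
is available. -/
structure IsDirichletRep (f g : ℝ → ℝ) (v w : Hsp) : Prop where
  ae_eq : ∀ᵐ x ∂μ01, f x = v x
  zero_left : f 0 = 0
  zero_right : f 1 = 0
  absCont : AbsolutelyContinuousOnInterval f 0 1
  absCont_deriv : AbsolutelyContinuousOnInterval g 0 1
  hasDerivAt : ∀ x ∈ Ioo (0 : ℝ) 1, HasDerivAt f (g x) x
  ae_hasDerivAt : ∀ᵐ x ∂μ01, HasDerivAt g (w x) x

namespace InDomainA

lemma exists_rep {v w : Hsp} (h : InDomainA v w) : ∃ f g, IsDirichletRep f g v w := by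
  obtain ⟨f, hf, hf0, hf1, hfv, g, hfg, hgw⟩ := h
  have hhalf : (1 / 2 : ℝ) ∈ Ioo (0 : ℝ) 1 := by norm_num
  have hw : IntervalIntegrable w volume 0 1 := intervalIntegrable_coeFn w (by simp) (by simp)
  have hhalf' : (1 / 2 : ℝ) ∈ uIcc (0 : ℝ) 1 := by
    rw [uIcc_of_le zero_le_one]
    exact Ioo_subset_Icc_self hhalf
  set G : ℝ → ℝ := fun x => g (1 / 2) + ∫ z in (1 / 2)..x, w z
  have hG : AbsolutelyContinuousOnInterval G 0 1 :=
    (contDiffOn_const.absolutelyContinuousOnInterval).fun_add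
      (hw.absolutelyContinuousOnInterval_intervalIntegral hhalf')
  have hfG : ∀ x ∈ Ioo (0 : ℝ) 1, HasDerivAt f (G x) x := fun x hx => by
    simpa only [G, ← hgw x hx (1 / 2) hhalf, add_sub_cancel] using hfg x hx
  obtain ⟨C, hC⟩ := hG.exists_bound
  rw [uIcc_of_le zero_le_one] at hC
  refine ⟨f, G, hfv, hf0, hf1, absolutelyContinuousOnInterval_of_bound_deriv zero_lt_one hf hfG
    fun x hx => hC x (Ioo_subset_Icc_self hx), hG, hfG, ?_⟩
  rw [ae_μ01_iff]
  filter_upwards [hw.ae_hasDerivAt_integral] with x hx hx01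
  refine (hx ?_ _ hhalf').const_add _
  rw [uIcc_of_le zero_le_one]
  exact Ioo_subset_Icc_self hx01

lemma sub {v w v' w' : Hsp} (h : InDomainA v w) (h' : InDomainA v' w') :
    InDomainA (v - v') (w - w') := by
  obtain ⟨f, hf, hf0, hf1, hfv, g, hfg, hgw⟩ := h
  obtain ⟨f', hf', hf0', hf1', hfv', g', hfg', hgw'⟩ := h'
  refine ⟨f - f', hf.sub hf', by simp [hf0, hf0'], by simp [hf1, hf1'], ?_, g - g',
    fun x hx => (hfg x hx).sub (hfg' x hx), fun x hx y hy => ?_⟩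
  · filter_upwards [hfv, hfv', Lp.coeFn_sub v v'] with x h1 h2 h3
    rw [h3, Pi.sub_apply, Pi.sub_apply, h1, h2]
  · have hsub : ∫ z in y..x, (w - w' : Hsp) z = ∫ z in y..x, (w z - w' z) := by
      refine intervalIntegral.integral_congr_ae ?_
      filter_upwards [ae_μ01_iff.1 (Lp.coeFn_sub w w')] with z hz hzxy
      exact hz (ordConnected_Ioo.uIcc_subset hy hx (uIoc_subset_uIcc hzxy))
    have hx' := Ioo_subset_Icc_self hx
    have hy' := Ioo_subset_Icc_self hy
    rw [hsub, intervalIntegral.integral_sub (intervalIntegrable_coeFn w hy' hx')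
      (intervalIntegrable_coeFn w' hy' hx'), ← hgw x hx y hy, ← hgw' x hx y hy, Pi.sub_apply,
      Pi.sub_apply]
    ring

end InDomainA

lemma inDomainA_toL2 {φ φ' φ'' : C(ℝ, ℝ)} (hφ : ∀ x, HasDerivAt φ (φ' x) x)
    (hφ' : ∀ x, HasDerivAt φ' (φ'' x) x) (h0 : φ 0 = 0) (h1 : φ 1 = 0) :
    InDomainA (toL2 φ) (toL2 φ'') := by
  refine ⟨φ, φ.continuous.continuousOn, h0, h1, (coeFn_toL2 φ).mono fun _ hx => hx.symm, φ',
    fun x _ => hφ x, fun x hx y hy => ?_⟩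
  rw [← intervalIntegral.integral_eq_sub_of_hasDerivAt (fun z _ => hφ' z)
    (φ''.continuous.intervalIntegrable _ _)]
  refine intervalIntegral.integral_congr_ae ?_
  filter_upwards [ae_μ01_iff.1 (coeFn_toL2 φ'')] with z hz hzxy
  exact (hz (ordConnected_Ioo.uIcc_subset hy hx (uIoc_subset_uIcc hzxy))).symm

namespace IsDirichletRep

variable {f g : ℝ → ℝ} {v w : Hsp}

lemma integral_mul_eq_neg (h : IsDirichletRep f g v w) {ψ : ℝ → ℝ}
    (hψ : AbsolutelyContinuousOnInterval ψ 0 1) (h0 : ψ 0 = 0) (h1 : ψ 1 = 0) :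
    ∫ x, ψ x * w x ∂μ01 = -∫ x, deriv ψ x * g x ∂μ01 := by
  have hparts := hψ.integral_mul_deriv_eq_deriv_mul h.absCont_deriv
  rw [h0, h1, zero_mul, zero_mul, sub_zero, zero_sub, ← integral_μ01, ← integral_μ01] at hparts
  rw [← hparts]
  exact integral_congr_ae (h.ae_hasDerivAt.mono fun x hx => by simp only [hx.deriv])

lemma inner_eq_neg_integral {f' g' : ℝ → ℝ} {v' w' : Hsp} (h : IsDirichletRep f g v w)
    (h' : IsDirichletRep f' g' v' w') : ⟪v, w'⟫ = -∫ x, g x * g' x ∂μ01 := by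
  have hderiv : ∫ x, g x * g' x ∂μ01 = ∫ x, deriv f x * g' x ∂μ01 :=
    integral_congr_ae (ae_μ01_mem_Ioo.mono fun x hx => by
      simp only [(h.hasDerivAt x hx).deriv])
  rw [hderiv, ← h'.integral_mul_eq_neg h.absCont h.zero_left h.zero_right,
    real_inner_eq_integral_mul]
  exact integral_congr_ae (h.ae_eq.mono fun x hx => by simp only [hx])

lemma deriv_negPart_mul_nonpos (h : IsDirichletRep f g v w) {x : ℝ} (hx : x ∈ Ioo (0 : ℝ) 1) :
    deriv (fun y => max (-f y) 0) x * g x ≤ 0 := by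
  have hd := h.hasDerivAt x hx
  rcases lt_trichotomy (f x) 0 with hneg | hzero | hpos
  · have heq : (fun y => max (-f y) 0) =ᶠ[𝓝 x] fun y => -f y := by
      filter_upwards [hd.continuousAt.eventually_lt_const hneg] with y hy
      exact max_eq_left (by linarith)
    rw [heq.deriv_eq, hd.fun_neg.deriv]
    nlinarith [mul_self_nonneg (g x)]
  · have hmin : IsLocalMin (fun y => max (-f y) 0) x :=
      .of_forall fun y => by simp [hzero]
    rw [hmin.deriv_eq_zero, zero_mul]
  · have heq : (fun y => max (-f y) 0) =ᶠ[𝓝 x] fun _ => 0 := by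
      filter_upwards [hd.continuousAt.eventually_const_lt hpos] with y hy
      exact max_eq_right (by linarith)
    rw [heq.deriv_eq, deriv_const, zero_mul]

end IsDirichletRep

namespace InDomainA

lemma inner_comm {v w v' w' : Hsp} (h : InDomainA v w) (h' : InDomainA v' w') :
    ⟪v, w'⟫ = ⟪v', w⟫ := by
  obtain ⟨f, g, hf⟩ := h.exists_rep
  obtain ⟨f', g', hf'⟩ := h'.exists_rep
  simp only [hf.inner_eq_neg_integral hf', hf'.inner_eq_neg_integral hf, mul_comm]

lemma inner_negPart_nonneg {v w : Hsp} (h : InDomainA v w) : 0 ≤ ⟪Lp.negPart v, w⟫ := by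
  obtain ⟨f, g, hf⟩ := h.exists_rep
  have hψ : AbsolutelyContinuousOnInterval (fun x => max (-f x) 0) 0 1 :=
    absolutelyContinuousOnInterval_of_dist_le (C := 1) hf.absCont fun x _ y _ => by
      rw [one_mul, Real.dist_eq, Real.dist_eq, ← abs_neg (f x - f y), neg_sub']
      exact abs_max_sub_max_le_abs (-f x) (-f y) 0
  have hinner : ⟪Lp.negPart v, w⟫ = ∫ x, max (-f x) 0 * w x ∂μ01 := by
    rw [real_inner_eq_integral_mul]
    refine integral_congr_ae ?_
    filter_upwards [hf.ae_eq, Lp.coeFn_negPart_eq_max v] with x hfx hx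
    rw [hx, hfx]
  rw [hinner, hf.integral_mul_eq_neg hψ (by simp [hf.zero_left]) (by simp [hf.zero_right]),
    neg_nonneg]
  exact integral_nonpos_of_ae (ae_μ01_mem_Ioo.mono fun x hx => hf.deriv_negPart_mul_nonpos hx)

lemma ae_eq_zero_of_eq_zero {v w : Hsp} (h : InDomainA v w) :
    ∀ᵐ x ∂μ01, v x = 0 → w x = 0 := by
  obtain ⟨f, g, hf⟩ := h.exists_rep
  filter_upwards [hf.ae_eq, hf.ae_hasDerivAt, ae_μ01_mem_Ioo,
    ae_restrict_of_ae (ae_deriv_eq_zero_of_eq_const f 0),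
    ae_restrict_of_ae (ae_deriv_eq_zero_of_eq_const g 0)] with x hfv hgw hx hf0 hg0 hv
  rw [(hf.hasDerivAt x hx).deriv, hfv] at hf0
  rw [hgw.deriv] at hg0
  exact hg0 (hf0 hv)

end InDomainA

/-! ### Maximum principles -/

/-- The regularity shared by the strong solutions of all problems on `[τ,∞)`: `z` is continuous,
takes values in the domain of the Dirichlet Laplacian for almost every time, with second spatial
derivative `zxx`, and is the primitive of its time derivative `z'` on `(τ,∞)`. -/
structure IsRegularCurve (τ : ℝ) (z z' zxx : ℝ → Hsp) : Prop where
  cont : ContinuousOn z (Ici τ)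
  dom : ∀ᵐ t ∂volume.restrict (Ioi τ), InDomainA (z t) (zxx t)
  fund : ∀ T1 T2 : ℝ, τ < T1 → T1 < T2 → IntervalIntegrable z' volume T1 T2 ∧
    ∀ t ∈ Icc T1 T2, z t = z T1 + ∫ s in T1..t, z' s

namespace IsRegularCurve

variable {τ : ℝ} {z z' zxx y y' yxx : ℝ → Hsp}

lemma mono (hz : IsRegularCurve τ z z' zxx) {s : ℝ} (hτs : τ ≤ s) :
    IsRegularCurve s z z' zxx where
  cont := hz.cont.mono (Ici_subset_Ici.2 hτs)
  dom := ae_restrict_of_ae_restrict_of_subset (Ioi_subset_Ioi hτs) hz.dom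
  fund _ _ h := hz.fund _ _ (hτs.trans_lt h)

lemma sub (hz : IsRegularCurve τ z z' zxx) (hy : IsRegularCurve τ y y' yxx) :
    IsRegularCurve τ (z - y) (z' - y') (zxx - yxx) where
  cont := hz.cont.sub hy.cont
  dom := by
    filter_upwards [hz.dom, hy.dom] with t h h'
    exact h.sub h'
  fund T1 T2 hT1 hT := by
    obtain ⟨hz', hzt⟩ := hz.fund T1 T2 hT1 hT
    obtain ⟨hy', hyt⟩ := hy.fund T1 T2 hT1 hT
    refine ⟨hz'.sub hy', fun t ht => ?_⟩
    have hsub : uIcc T1 t ⊆ uIcc T1 T2 := uIcc_subset_uIcc_left (Icc_subset_uIcc ht)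
    simp only [Pi.sub_apply]
    rw [intervalIntegral.integral_sub (hz'.mono_set hsub) (hy'.mono_set hsub), hzt t ht, hyt t ht]
    abel

lemma ae_hasDerivAt (hz : IsRegularCurve τ z z' zxx) :
    ∀ᵐ t ∂volume.restrict (Ioi τ), HasDerivAt z (z' t) t := by
  refine ae_restrict_Ioi_of_forall_Ioo fun a b hτa hab => ?_
  obtain ⟨hint, heq⟩ := hz.fund a b hτa hab
  filter_upwards [hint.ae_hasDerivAt_integral] with t ht htab
  refine ((ht (Icc_subset_uIcc (Ioo_subset_Icc_self htab)) a left_mem_uIcc).const_add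
    (z a)).congr_of_eventuallyEq ?_
  filter_upwards [Ioo_mem_nhds htab.1 htab.2] with s hs
  exact heq s (Ioo_subset_Icc_self hs)

lemma absolutelyContinuousOnInterval (hz : IsRegularCurve τ z z' zxx) {a b : ℝ} (hτa : τ < a)
    (hab : a < b) : AbsolutelyContinuousOnInterval z a b := by
  obtain ⟨hint, heq⟩ := hz.fund a b hτa hab
  refine absolutelyContinuousOnInterval_of_dist_le (C := 1)
    (absolutelyContinuousOnInterval_integral hint) fun x hx y hy => ?_
  rw [uIcc_of_le hab.le] at hx hy
  rw [heq x hx, heq y hy, dist_add_left, one_mul]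

lemma absolutelyContinuousOnInterval_norm_sq_negPart (hz : IsRegularCurve τ z z' zxx) {a b : ℝ}
    (hτa : τ < a) (hab : a < b) :
    AbsolutelyContinuousOnInterval (fun t => ‖Lp.negPart (z t)‖ ^ 2) a b := by
  have hnorm : AbsolutelyContinuousOnInterval (fun t => ‖Lp.negPart (z t)‖) a b :=
    absolutelyContinuousOnInterval_of_dist_le (C := 1)
      (hz.absolutelyContinuousOnInterval hτa hab) fun x _ y _ => by
        rw [one_mul, Real.dist_eq, dist_eq_norm]
        exact (abs_norm_sub_norm_le _ _).trans (norm_negPart_sub_negPart_le _ _)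
  simpa only [sq] using hnorm.fun_mul hnorm

/-- The weak maximum principle: `‖z⁻‖²` satisfies a linear differential inequality, because
`⟪z⁻, zxx⟫ ≥ 0`. -/
theorem nonneg_of_supersolution (hz : IsRegularCurve τ z z' zxx) {T K : ℝ} (hT : τ ≤ T)
    (hsup : ∀ᵐ t ∂volume.restrict (Ioo τ T), ∀ᵐ x ∂μ01,
      z t x < 0 → zxx t x + K * z t x ≤ z' t x)
    (h0 : 0 ≤ z τ) : 0 ≤ z T := by
  rcases hT.eq_or_lt with rfl | hτT
  · exact h0
  set N : ℝ → ℝ := fun t => ‖Lp.negPart (z t)‖ ^ 2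
  have hderiv : ∀ᵐ t ∂volume.restrict (Ioo τ T), deriv N t ≤ 2 * K * N t := by
    have hsub : Ioo τ T ⊆ Ioi τ := Ioo_subset_Ioi_self
    filter_upwards [hsup, ae_restrict_of_ae_restrict_of_subset hsub hz.ae_hasDerivAt,
      ae_restrict_of_ae_restrict_of_subset hsub hz.dom] with t hle hd hdom
    have hN : deriv N t = -2 * ⟪Lp.negPart (z t), z' t⟫ := by
      exact (((hasFDerivAt_norm_sq_negPart (z t)).comp_hasDerivAt t hd).deriv).trans (by simp)
    have hinner : ⟪Lp.negPart (z t), zxx t + K • z t⟫ ≤ ⟪Lp.negPart (z t), z' t⟫ := by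
      refine inner_negPart_le_of_neg ?_
      filter_upwards [hle, Lp.coeFn_add (zxx t) (K • z t), Lp.coeFn_smul K (z t)] with x hx h1 h2
      rw [h1, Pi.add_apply, h2]
      exact hx
    rw [inner_add_right, inner_smul_right, inner_negPart_self] at hinner
    rw [hN]
    linarith [hdom.inner_negPart_nonneg]
  have hgronwall : ∀ a ∈ Ioo τ T, N T ≤ Real.exp (2 * K * (T - a)) * N a := fun a ha =>
    le_exp_mul_of_ae_deriv_le ha.2.le
      (hz.absolutelyContinuousOnInterval_norm_sq_negPart ha.1 ha.2)
      (ae_restrict_of_ae_restrict_of_subset (Ioo_subset_Ioo_left ha.1.le) hderiv)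
  have hN0 : N τ = 0 := by simp [N, negPart_eq_zero_iff_nonneg.2 h0]
  have hcont : ContinuousWithinAt N (Ioi τ) τ :=
    (((Lp.continuous_negPart.norm.pow 2).comp_continuousOn hz.cont) τ self_mem_Ici).mono
      Ioi_subset_Ici_self
  have hlim : Tendsto (fun a => Real.exp (2 * K * (T - a)) * N a) (𝓝[>] τ) (𝓝 0) := by
    simpa [hN0] using ((by fun_prop : Continuous fun a => Real.exp (2 * K * (T - a)))
      |>.continuousWithinAt (s := Ioi τ) (x := τ)).tendsto.mul hcont.tendsto
  have hNT : N T ≤ 0 := ge_of_tendsto hlim (mem_of_superset (Ioo_mem_nhdsGT hτT) hgronwall)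
  exact negPart_eq_zero_iff_nonneg.1
    (norm_eq_zero.1 (pow_eq_zero_iff two_ne_zero |>.1 (hNT.antisymm (sq_nonneg _))))

end IsRegularCurve

/-! ### The moving barrier and the strong maximum principle -/

lemma hasDerivAt_max_zero_pow (n : ℕ) (y : ℝ) :
    HasDerivAt (fun y : ℝ => max y 0 ^ (n + 2)) ((n + 2) * max y 0 ^ (n + 1)) y := by
  rcases lt_trichotomy y 0 with hy | rfl | hy
  · rw [max_eq_right hy.le, zero_pow n.succ_ne_zero, mul_zero]
    refine (hasDerivAt_const y (0 : ℝ)).congr_of_eventuallyEq ?_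
    filter_upwards [gt_mem_nhds hy] with z hz
    rw [max_eq_right hz.le, zero_pow (n + 1).succ_ne_zero]
  · rw [hasDerivAt_iff_isLittleO_nhds_zero]
    refine Asymptotics.IsBigO.trans_isLittleO (.of_bound 1 (.of_forall fun h => ?_))
      (Asymptotics.isLittleO_norm_pow_id (n := n + 2) (by lia))
    have hle : |max h 0| ≤ |h| := by
      rw [abs_of_nonneg (le_max_right h 0)]
      exact max_le (le_abs_self h) (abs_nonneg h)
    simpa using pow_le_pow_left₀ (abs_nonneg _) hle (n + 2)
  · rw [max_eq_left hy.le]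
    have hpow : HasDerivAt (fun y : ℝ => y ^ (n + 2)) ((n + 2) * y ^ (n + 1)) y := by
      simpa using hasDerivAt_pow (n + 2) y
    refine hpow.congr_of_eventuallyEq ?_
    filter_upwards [lt_mem_nhds hy] with z hz
    rw [max_eq_left hz.le]

section Barrier

variable (A α ρ : ℝ) (c c' : C(ℝ, ℝ))

/-- The barrier `A e^{-α t} (ρ² - (x - c(t))²)₊³`: a `C²` bump of radius `ρ` whose centre moves
along the path `c`. For `α` large it is a subsolution of the heat equation, and it carries
positivity along `c`. -/
def barrier : C(ℝ × ℝ, ℝ) where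
  toFun p := A * Real.exp (-α * p.1) * max (ρ ^ 2 - (p.2 - c p.1) ^ 2) 0 ^ 3

/-- The time derivative of `barrier A α ρ c`, where `c'` is the velocity of the centre. -/
def barrierDt : C(ℝ × ℝ, ℝ) where
  toFun p := A * Real.exp (-α * p.1) * (3 * max (ρ ^ 2 - (p.2 - c p.1) ^ 2) 0 ^ 2 *
    (2 * (c' p.1 * (p.2 - c p.1))) - α * max (ρ ^ 2 - (p.2 - c p.1) ^ 2) 0 ^ 3)

/-- The first spatial derivative of `barrier A α ρ c`. -/
def barrierDx : C(ℝ × ℝ, ℝ) where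
  toFun p := A * Real.exp (-α * p.1) *
    (3 * max (ρ ^ 2 - (p.2 - c p.1) ^ 2) 0 ^ 2 * (-2 * (p.2 - c p.1)))

/-- The second spatial derivative of `barrier A α ρ c`. -/
def barrierDxx : C(ℝ × ℝ, ℝ) where
  toFun p := A * Real.exp (-α * p.1) *
    (24 * max (ρ ^ 2 - (p.2 - c p.1) ^ 2) 0 * (p.2 - c p.1) ^ 2 -
      6 * max (ρ ^ 2 - (p.2 - c p.1) ^ 2) 0 ^ 2)

variable {A α ρ c c'}

lemma hasDerivAt_barrier_time (hc : ∀ t, HasDerivAt c (c' t) t) (t x : ℝ) :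
    HasDerivAt (fun t => barrier A α ρ c (t, x)) (barrierDt A α ρ c c' (t, x)) t := by
  have hq := (((hc t).const_sub x).pow 2).const_sub (ρ ^ 2)
  have he := (((hasDerivAt_id t).const_mul (-α)).exp).const_mul A
  refine (he.mul ((hasDerivAt_max_zero_pow 1 _).comp t hq)).congr_deriv ?_
  simp only [barrierDt, ContinuousMap.coe_mk, Function.comp_apply, Pi.pow_apply, id_eq]
  push_cast
  ring

lemma hasDerivAt_barrier (t x : ℝ) :
    HasDerivAt ((barrier A α ρ c).curry t) ((barrierDx A α ρ c).curry t x) x := by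
  have hq := (((hasDerivAt_id x).sub_const (c t)).pow 2).const_sub (ρ ^ 2)
  refine (((hasDerivAt_max_zero_pow 1 _).comp x hq).const_mul
    (A * Real.exp (-α * t))).congr_deriv ?_
  simp only [barrierDx, ContinuousMap.coe_mk, ContinuousMap.curry_apply, Pi.pow_apply, id_eq]
  push_cast
  ring

lemma hasDerivAt_barrierDx (t x : ℝ) :
    HasDerivAt ((barrierDx A α ρ c).curry t) ((barrierDxx A α ρ c).curry t x) x := by
  have hξ := (hasDerivAt_id x).sub_const (c t)
  have hq := (hξ.pow 2).const_sub (ρ ^ 2)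
  refine (((((hasDerivAt_max_zero_pow 0 _).comp x hq).const_mul 3).mul
    (hξ.const_mul (-2))).const_mul (A * Real.exp (-α * t))).congr_deriv ?_
  simp only [barrierDxx, ContinuousMap.coe_mk, ContinuousMap.curry_apply, Function.comp_apply,
    Pi.pow_apply, id_eq]
  push_cast
  ring

lemma barrier_eq_zero {t x : ℝ} (hρ : 0 ≤ ρ) (hx : ρ ≤ |x - c t|) :
    barrier A α ρ c (t, x) = 0 := by
  have hq : ρ ^ 2 - (x - c t) ^ 2 ≤ 0 := by
    rw [sub_nonpos, ← sq_abs (x - c t)]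
    gcongr
  simp [barrier, max_eq_right hq]

lemma barrier_le (hA : 0 ≤ A) (t x : ℝ) :
    barrier A α ρ c (t, x) ≤ A * Real.exp (-α * t) * ρ ^ 6 := by
  have hq : max (ρ ^ 2 - (x - c t) ^ 2) 0 ≤ ρ ^ 2 :=
    max_le (by linarith [sq_nonneg (x - c t)]) (sq_nonneg ρ)
  calc barrier A α ρ c (t, x) ≤ A * Real.exp (-α * t) * (ρ ^ 2) ^ 3 := by
        simp only [barrier, ContinuousMap.coe_mk]
        gcongr
    _ = A * Real.exp (-α * t) * ρ ^ 6 := by ring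

/-- Completing the square in `q`; `β` is chosen so that the discriminant is nonpositive. -/
lemma cubic_le_of_discrim {ρ κ β q ξ p : ℝ} (hρ : 0 < ρ) (hq : 0 ≤ q) (hξ : ξ ^ 2 = ρ ^ 2 - q)
    (hp : |p| ≤ κ) (hβ : (30 + 6 * κ * ρ) ^ 2 ≤ 96 * ρ ^ 2 * β) :
    6 * q ^ 2 * (p * ξ) ≤ β * q ^ 3 + 24 * q * ξ ^ 2 - 6 * q ^ 2 := by
  have hξρ : |ξ| ≤ ρ := abs_le_of_sq_le_sq (by linarith) hρ.le
  have hpξ : p * ξ ≤ κ * ρ := (le_abs_self _).trans <| by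
    rw [abs_mul]
    exact mul_le_mul hp hξρ (abs_nonneg ξ) ((abs_nonneg p).trans hp)
  have hquad : 0 ≤ β * q ^ 2 - (30 + 6 * κ * ρ) * q + 24 * ρ ^ 2 := by
    refine nonneg_of_mul_nonneg_right (a := 96 * ρ ^ 2) ?_ (by positivity)
    nlinarith [sq_nonneg ((30 + 6 * κ * ρ) * q - 48 * ρ ^ 2),
      mul_le_mul_of_nonneg_right hβ (sq_nonneg q)]
  have hdrift : 6 * q ^ 2 * (p * ξ) ≤ 6 * q ^ 2 * (κ * ρ) := by gcongr
  rw [hξ]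
  linarith [mul_nonneg hq hquad]

lemma barrierDt_le {κ K : ℝ} (hA : 0 ≤ A) (hρ : 0 < ρ) (hc' : ∀ t, |c' t| ≤ κ)
    (hα : (30 + 6 * κ * ρ) ^ 2 ≤ 96 * ρ ^ 2 * (α + K)) (p : ℝ × ℝ) :
    barrierDt A α ρ c c' p ≤ barrierDxx A α ρ c p + K * barrier A α ρ c p := by
  obtain ⟨t, x⟩ := p
  have hbracket : ∀ q : ℝ, (q = 0 ∨ (0 ≤ q ∧ (x - c t) ^ 2 = ρ ^ 2 - q)) →
      3 * q ^ 2 * (2 * (c' t * (x - c t))) - α * q ^ 3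
        ≤ 24 * q * (x - c t) ^ 2 - 6 * q ^ 2 + K * q ^ 3 := by
    rintro q (rfl | ⟨hq, hξ⟩)
    · simp
    · linarith [cubic_le_of_discrim hρ hq hξ (hc' t) hα]
  have hmax := hbracket (max (ρ ^ 2 - (x - c t) ^ 2) 0) <| by
    rcases max_cases (ρ ^ 2 - (x - c t) ^ 2) 0 with ⟨h, -⟩ | ⟨h, -⟩
    · exact .inr ⟨le_max_right _ _, by rw [h]; ring⟩
    · exact .inl h
  simp only [barrierDt, barrierDxx, barrier, ContinuousMap.coe_mk]
  linarith [mul_le_mul_of_nonneg_left hmax (mul_nonneg hA (Real.exp_pos (-α * t)).le)]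

lemma isRegularCurve_barrier (hc : ∀ t, HasDerivAt c (c' t) t) (hρ : 0 ≤ ρ)
    (hc0 : ∀ t, c t ∈ Icc (0 + ρ) (1 - ρ)) (s : ℝ) :
    IsRegularCurve s (fun t => toL2 ((barrier A α ρ c).curry t))
      (fun t => toL2 ((barrierDt A α ρ c c').curry t))
      (fun t => toL2 ((barrierDxx A α ρ c).curry t)) where
  cont := (continuous_toL2_curry _).continuousOn
  dom := .of_forall fun t => by
    refine inDomainA_toL2 (hasDerivAt_barrier t) (hasDerivAt_barrierDx t)
      (barrier_eq_zero hρ ?_) (barrier_eq_zero hρ ?_)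
    · exact le_abs.2 (.inr (by linarith [(hc0 t).1]))
    · exact le_abs.2 (.inl (by linarith [(hc0 t).2]))
  fund T1 T2 _ _ := by
    have hint : ∀ a b, IntervalIntegrable (fun t => toL2 ((barrierDt A α ρ c c').curry t))
        volume a b := (continuous_toL2_curry _).intervalIntegrable
    refine ⟨hint _ _, fun t _ => ?_⟩
    rw [intervalIntegral.integral_eq_sub_of_hasDerivAt
      (fun r _ => hasDerivAt_toL2_curry (hasDerivAt_barrier_time hc) r) (hint _ _)]
    abel

end Barrier

/-- The half period of a cosine is a `C¹` path from `x₀` to `x₁` that never leaves the segment. -/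
lemma exists_path_in_segment {s T : ℝ} (hsT : s < T) (x₀ x₁ : ℝ) :
    ∃ (c c' : C(ℝ, ℝ)) (κ : ℝ), (∀ t, HasDerivAt c (c' t) t) ∧ (∀ t, |c' t| ≤ κ) ∧
      c s = x₀ ∧ c T = x₁ ∧ ∀ t, c t ∈ segment ℝ x₀ x₁ := by
  set ν := Real.pi / (T - s)
  refine ⟨⟨fun t => (1 + Real.cos (ν * (t - s))) / 2 * x₀ + (1 - Real.cos (ν * (t - s))) / 2 * x₁,
    by fun_prop⟩, ⟨fun t => ν * (x₁ - x₀) / 2 * Real.sin (ν * (t - s)), by fun_prop⟩,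
    |ν * (x₁ - x₀) / 2|, fun t => ?_, fun t => ?_, ?_, ?_, fun t => ?_⟩
  · have hcos := (((hasDerivAt_id t).sub_const s).const_mul ν).cos
    refine (((hcos.const_add 1).div_const 2).mul_const x₀ |>.add
      (((hcos.const_sub 1).div_const 2).mul_const x₁)).congr_deriv ?_
    simp only [ContinuousMap.coe_mk, id_eq]
    ring
  · simpa only [ContinuousMap.coe_mk, abs_mul, mul_one] using
      mul_le_mul_of_nonneg_left (Real.abs_sin_le_one (ν * (t - s))) (abs_nonneg _)
  · simp
  · have hνT : ν * (T - s) = Real.pi := div_mul_cancel₀ _ (sub_pos.2 hsT).ne'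
    simp [hνT]
  · exact ⟨_, _, by linarith [Real.neg_one_le_cos (ν * (t - s))],
      by linarith [Real.cos_le_one (ν * (t - s))], by ring, rfl⟩

lemma exists_pos_le_mem_Icc {ε a b x y : ℝ} (hε : 0 < ε) (hx : x ∈ Ioo a b) (hy : y ∈ Ioo a b) :
    ∃ ρ, 0 < ρ ∧ ρ ≤ ε ∧ x ∈ Icc (a + ρ) (b - ρ) ∧ y ∈ Icc (a + ρ) (b - ρ) := by
  obtain ⟨ρ, hρ, hmin⟩ : ∃ ρ, 0 < ρ ∧ ρ < min ε (min (min (x - a) (b - x)) (min (y - a) (b - y))) :=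
    exists_between (by simpa only [lt_min_iff, sub_pos] using ⟨hε, hx, hy⟩)
  simp only [lt_min_iff] at hmin
  obtain ⟨h, ⟨h₁, h₂⟩, h₃, h₄⟩ := hmin
  exact ⟨ρ, hρ, h.le, ⟨by linarith, by linarith⟩, ⟨by linarith, by linarith⟩⟩

namespace IsRegularCurve

variable {s T K : ℝ} {z z' zxx : ℝ → Hsp}

lemma ae_barrier_le (hz : IsRegularCurve s z z' zxx) (hsT : s ≤ T)
    (hsup : ∀ᵐ t ∂volume.restrict (Ioo s T), ∀ᵐ x ∂μ01, zxx t x + K * z t x ≤ z' t x)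
    {A α ρ κ : ℝ} {c c' : C(ℝ, ℝ)} (hc : ∀ t, HasDerivAt c (c' t) t) (hc' : ∀ t, |c' t| ≤ κ)
    (hA : 0 ≤ A) (hρ : 0 < ρ) (hc0 : ∀ t, c t ∈ Icc (0 + ρ) (1 - ρ))
    (hα : (30 + 6 * κ * ρ) ^ 2 ≤ 96 * ρ ^ 2 * (α + K))
    (h0 : ∀ᵐ x ∂μ01, barrier A α ρ c (s, x) ≤ z s x) :
    ∀ᵐ x ∂μ01, barrier A α ρ c (T, x) ≤ z T x := by
  have hnonneg := (hz.sub (isRegularCurve_barrier (A := A) (α := α) hc hρ.le hc0 s)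
    ).nonneg_of_supersolution (K := K) hsT ?_ ?_
  · filter_upwards [(Lp.coeFn_nonneg _).2 hnonneg, Lp.coeFn_sub (z T) _,
      coeFn_toL2 ((barrier A α ρ c).curry T)] with x hx hsub hbar
    rw [Pi.sub_apply, hsub, Pi.sub_apply, hbar] at hx
    exact sub_nonneg.1 hx
  · filter_upwards [hsup] with t ht
    simp only [Pi.sub_apply]
    filter_upwards [ht, coeFn_toL2 ((barrier A α ρ c).curry t),
      coeFn_toL2 ((barrierDt A α ρ c c').curry t), coeFn_toL2 ((barrierDxx A α ρ c).curry t),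
      Lp.coeFn_sub (z t) (toL2 ((barrier A α ρ c).curry t)),
      Lp.coeFn_sub (z' t) (toL2 ((barrierDt A α ρ c c').curry t)),
      Lp.coeFn_sub (zxx t) (toL2 ((barrierDxx A α ρ c).curry t))] with x hx h1 h2 h3 h4 h5 h6 _
    rw [h4, h5, h6, Pi.sub_apply, Pi.sub_apply, Pi.sub_apply, h1, h2, h3]
    have := barrierDt_le (c := c) hA hρ hc' hα (t, x)
    simp only [ContinuousMap.curry_apply]
    linarith
  · rw [← Lp.coeFn_nonneg]
    filter_upwards [h0, Lp.coeFn_sub (z s) (toL2 ((barrier A α ρ c).curry s)),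
      coeFn_toL2 ((barrier A α ρ c).curry s)] with x hx hsub hbar
    rw [Pi.sub_apply, hsub, Pi.sub_apply, hbar]
    exact sub_nonneg.2 hx

/-- The strong maximum principle: a barrier of small height and radius that starts around `x₀` at
time `s` and reaches `x₁` at time `T` stays below `z`. -/
theorem pos_of_supersolution (hz : IsRegularCurve s z z' zxx) (hsT : s < T)
    (hsup : ∀ᵐ t ∂volume.restrict (Ioo s T), ∀ᵐ x ∂μ01, zxx t x + K * z t x ≤ z' t x)
    (h0 : 0 ≤ z s) {f g : ℝ → ℝ} (hf : ContinuousOn f (Ioo 0 1)) (hfz : ∀ᵐ x ∂μ01, f x = z s x)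
    (hg : ContinuousOn g (Ioo 0 1)) (hgz : ∀ᵐ x ∂μ01, g x = z T x)
    {x₀ x₁ : ℝ} (hx₀ : x₀ ∈ Ioo (0 : ℝ) 1) (hx₁ : x₁ ∈ Ioo (0 : ℝ) 1) (hpos : 0 < f x₀) :
    0 < g x₁ := by
  obtain ⟨ρ₀, hρ₀, hball⟩ := Metric.eventually_nhds_iff_ball.1
    ((hf.continuousAt (Ioo_mem_nhds hx₀.1 hx₀.2)).eventually (lt_mem_nhds (half_lt_self hpos)))
  obtain ⟨ρ, hρ, hρρ₀, hρx₀, hρx₁⟩ := exists_pos_le_mem_Icc hρ₀ hx₀ hx₁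
  obtain ⟨c, c', κ, hc, hc', hcs, hcT, hseg⟩ := exists_path_in_segment hsT x₀ x₁
  set α := (30 + 6 * κ * ρ) ^ 2 / (96 * ρ ^ 2) - K
  set A := f x₀ / 2 * Real.exp (α * s) / ρ ^ 6
  have hA : 0 < A := by positivity
  have hheight : A * Real.exp (-α * s) * ρ ^ 6 = f x₀ / 2 := by
    have hexp : Real.exp (α * s) * Real.exp (-α * s) = 1 := by
      rw [← Real.exp_add, neg_mul, add_neg_cancel, Real.exp_zero]
    calc A * Real.exp (-α * s) * ρ ^ 6
        = f x₀ / 2 * (Real.exp (α * s) * Real.exp (-α * s)) := by simp only [A]; field_simp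
      _ = f x₀ / 2 := by rw [hexp, mul_one]
  have hstart : ∀ᵐ x ∂μ01, barrier A α ρ c (s, x) ≤ z s x := by
    filter_upwards [(Lp.coeFn_nonneg _).2 h0, hfz] with x hx hfx
    rcases lt_or_ge |x - x₀| ρ with hxρ | hxρ
    · rw [← hfx]
      exact (barrier_le hA.le s x).trans
        (hheight.trans_le (hball x (hxρ.trans_le hρρ₀)).le)
    · rw [barrier_eq_zero hρ.le (by rwa [hcs])]
      exact hx
  have hend : ∀ᵐ x ∂μ01, barrier A α ρ c (T, x) ≤ g x := by
    filter_upwards [hgz, hz.ae_barrier_le hsT.le hsup hc hc' hA.le hρ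
      (fun t => (convex_Icc _ _).segment_subset hρx₀ hρx₁ (hseg t))
      (by simp only [α]; field_simp; ring_nf; rfl) hstart] with x hx hle
    exact hx ▸ hle
  refine lt_of_lt_of_le ?_ (le_of_ae_le_of_continuousOn isOpen_Ioo
    ((barrier A α ρ c).curry T).continuous.continuousOn hg hend x₁ hx₁)
  have hcentre : max (ρ ^ 2 - (x₁ - c T) ^ 2) 0 = ρ ^ 2 := by simp [hcT, sq_nonneg]
  simp only [ContinuousMap.curry_apply, barrier, ContinuousMap.coe_mk, hcentre]
  positivity

end IsRegularCurve

/-! ### Non-negative solutions of the inclusion -/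

lemma heaviside_of_pos {s : ℝ} (hs : 0 < s) : heaviside s = {1} := by
  rw [heaviside, if_neg hs.not_gt, if_neg hs.ne']

lemma IsLinearSolutionWith.isRegularCurve {b ω : ℝ → ℝ} {τ : ℝ} {u u' uxx : ℝ → Hsp}
    (h : IsLinearSolutionWith b ω τ u u' uxx) : IsRegularCurve τ u u' uxx :=
  ⟨h.cont, h.dom, h.fund⟩

lemma InDomainA.exists_pos_of_ne_zero {v w : Hsp} (hv : InDomainA v w) (hv0 : 0 ≤ v) (hne : v ≠ 0) :
    ∃ f : ℝ → ℝ, ContinuousOn f (Ioo 0 1) ∧ (∀ᵐ x ∂μ01, f x = v x) ∧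
      ∃ x ∈ Ioo (0 : ℝ) 1, 0 < f x := by
  obtain ⟨f, hf, -, -, hfv, -⟩ := hv
  refine ⟨f, hf.mono Ioo_subset_Icc_self, hfv, ?_⟩
  by_contra! hf0
  refine hne (Lp.eq_zero_iff_ae_eq_zero.2 ?_)
  filter_upwards [hfv, (Lp.coeFn_nonneg v).2 hv0, ae_μ01_mem_Ioo] with x hx hv0x hx01
  exact le_antisymm (hx ▸ hf0 x hx01) hv0x

namespace IsStrongSolutionWith

variable {b ω : ℝ → ℝ} {τ : ℝ} {u r u' uxx : ℝ → Hsp}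

lemma isRegularCurve (h : IsStrongSolutionWith b ω τ u r u' uxx) : IsRegularCurve τ u u' uxx :=
  ⟨h.cont, h.dom, h.fund⟩

/-- On `{u = 0}` both derivatives of a non-negative solution vanish, so that the selection of the
inclusion is `0` there. -/
lemma ae_eq_of_nonneg (h : IsStrongSolutionWith b ω τ u r u' uxx) (hu : NonnegOn u τ) :
    ∀ᵐ t ∂volume.restrict (Ioi τ), ∀ᵐ x ∂μ01,
      u' t x = (if 0 < u t x then b t else 0) + ω t * u t x + uxx t x := by
  filter_upwards [h.sel, h.dom, h.eq, h.isRegularCurve.ae_hasDerivAt,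
    ae_restrict_mem measurableSet_Ioi] with t hsel hdom heq hderiv (ht : τ < t)
  have hnonneg : ∀ᶠ s in 𝓝 t, 0 ≤ u s := by
    filter_upwards [Ioi_mem_nhds ht] with s hs
    exact (Lp.coeFn_nonneg _).1 (hu s (le_of_lt hs))
  have hadd : ∀ᵐ x ∂μ01, u' t x = r t x + uxx t x := by
    rw [heq]
    exact Lp.coeFn_add _ _
  filter_upwards [hsel, hadd, hu t ht.le, hdom.ae_eq_zero_of_eq_zero,
    ae_eq_zero_of_hasDerivAt_of_nonneg hderiv hnonneg] with x hr hx hux huxx hu'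
  rcases hux.eq_or_lt with h0 | hpos
  · rw [hu' h0.symm, huxx h0.symm, ← h0]
    simp
  · obtain ⟨k, hk, hrk⟩ := hr
    rw [heaviside_of_pos hpos, mem_singleton_iff] at hk
    rw [hx, hrk, hk, if_pos hpos, mul_one]

lemma pos_of_ne_zero (h : IsStrongSolutionWith b ω τ u r u' uxx) (hu : NonnegOn u τ)
    (hb : ∀ t, 0 ≤ b t) (hω : Continuous ω) {s t : ℝ} (hτs : τ ≤ s) (hst : s < t) (hs : u s ≠ 0)
    {g : ℝ → ℝ} (hg : ContinuousOn g (Ioo 0 1)) (hgu : ∀ᵐ x ∂μ01, g x = u t x) :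
    ∀ x ∈ Ioo (0 : ℝ) 1, 0 < g x := fun x₁ hx₁ => by
  obtain ⟨s', hs', hne, hdom⟩ : ∃ s' ∈ Ioo s t, u s' ≠ 0 ∧ InDomainA (u s') (uxx s') := by
    have hcont : Tendsto u (𝓝[>] s) (𝓝 (u s)) :=
      (h.cont s hτs).mono_left (nhdsWithin_mono s (Ioi_subset_Ici hτs))
    obtain ⟨a, hsa, ha⟩ := (mem_nhdsGT_iff_exists_Ioo_subset' hst).1
      (inter_mem (Ioo_mem_nhdsGT hst) (hcont.eventually_ne hs))
    have : NeBot (ae (volume.restrict (Ioo s a))) := ae_restrict_neBot.2 (by simpa using hsa)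
    have hdomI : ∀ᵐ q ∂volume.restrict (Ioo s a), InDomainA (u q) (uxx q) :=
      ae_restrict_of_ae_restrict_of_subset (Ioo_subset_Ioi_self.trans (Ioi_subset_Ioi hτs)) h.dom
    obtain ⟨s', hs', hdom⟩ := ((ae_restrict_mem measurableSet_Ioo).and hdomI).exists
    exact ⟨s', (ha hs').1, (ha hs').2, hdom⟩
  have hτs' : τ ≤ s' := hτs.trans hs'.1.le
  have hnonneg : 0 ≤ u s' := (Lp.coeFn_nonneg _).1 (hu s' hτs')
  obtain ⟨f, hf, hfu, x₀, hx₀, hpos⟩ := hdom.exists_pos_of_ne_zero hnonneg hne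
  obtain ⟨K, hK⟩ := (isCompact_Icc.image hω).bddBelow (α := ℝ) (s := ω '' Icc s' t)
  refine (h.isRegularCurve.mono hτs').pos_of_supersolution (K := K) hs'.2 ?_ hnonneg hf hfu hg hgu
    hx₀ hx₁ hpos
  filter_upwards [ae_restrict_of_ae_restrict_of_subset (Ioo_subset_Ioi_self.trans
    (Ioi_subset_Ioi hτs')) (h.ae_eq_of_nonneg hu), ae_restrict_mem measurableSet_Ioo] with q hq hqI
  filter_upwards [hq, hu q (hτs'.trans hqI.1.le)] with x hx hux
  have hKω : K * u q x ≤ ω q * u q x := by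
    gcongr
    exact hK (mem_image_of_mem ω (Ioo_subset_Icc_self hqI))
  have hsource : 0 ≤ if 0 < u q x then b q else 0 := by split_ifs <;> simp [hb q]
  linarith

end IsStrongSolutionWith

/-! ### Completeness of the sines -/

/-- The eigenfunction `x ↦ sin (k π x)` of the Dirichlet Laplacian on `(0,1)`. The index `0`, with
eigenfunction `0`, is allowed. -/
def sineFun (k : ℕ) : C(ℝ, ℝ) := ⟨fun x => Real.sin (k * Real.pi * x), by fun_prop⟩

/-- The function `x ↦ cos (π x)`: multiplication by it shifts the index of the sines. -/
def cosineFun : C(ℝ, ℝ) := ⟨fun x => Real.cos (Real.pi * x), by fun_prop⟩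

lemma sineFun_apply (k : ℕ) (x : ℝ) : sineFun k x = Real.sin (k * Real.pi * x) := rfl

lemma cosineFun_apply (x : ℝ) : cosineFun x = Real.cos (Real.pi * x) := rfl

lemma sineFun_zero : sineFun 0 = 0 := by
  ext x
  simp [sineFun_apply]

lemma abs_sineFun_le_one (k : ℕ) (x : ℝ) : |sineFun k x| ≤ 1 := Real.abs_sin_le_one _

lemma sineFun_succ_mul_cosineFun (k : ℕ) :
    sineFun (k + 1) * cosineFun = (1 / 2 : ℝ) • (sineFun k + sineFun (k + 2)) := by
  ext x
  have h := Real.two_mul_sin_mul_cos ((k + 1 : ℕ) * Real.pi * x) (Real.pi * x)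
  have hsub : ((k + 1 : ℕ) * Real.pi * x - Real.pi * x : ℝ) = k * Real.pi * x := by push_cast; ring
  have hadd : ((k + 1 : ℕ) * Real.pi * x + Real.pi * x : ℝ) = (k + 2 : ℕ) * Real.pi * x := by
    push_cast
    ring
  rw [hsub, hadd] at h
  simp only [ContinuousMap.mul_apply, ContinuousMap.smul_apply, ContinuousMap.add_apply,
    sineFun_apply, cosineFun_apply, smul_eq_mul]
  linarith

lemma exists_aeval_cosineFun_near (ψ : C(ℝ, ℝ)) {ε : ℝ} (hε : 0 < ε) :
    ∃ p : Polynomial ℝ, ∀ x ∈ Icc (0 : ℝ) 1, |Polynomial.aeval cosineFun p x - ψ x| < ε := by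
  obtain ⟨p, hp⟩ := exists_polynomial_near_of_continuousOn (-1) 1
    (fun y => ψ (Real.arccos y / Real.pi)) (by fun_prop) ε hε
  refine ⟨p, fun x hx => ?_⟩
  have hx' := hp (cosineFun x) (Real.cos_mem_Icc _)
  have harccos : Real.arccos (cosineFun x) = Real.pi * x :=
    Real.arccos_cos (mul_nonneg Real.pi_pos.le hx.1)
      (mul_le_of_le_one_right Real.pi_pos.le hx.2)
  rw [harccos, mul_div_cancel_left₀ x Real.pi_ne_zero] at hx'
  rwa [Polynomial.aeval_continuousMap_apply]

section Completeness

variable {v : Hsp} (hv : ∀ k, ⟪toL2 (sineFun k), v⟫ = 0)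

include hv

lemma inner_sineFun_mul_cosineFun_pow_eq_zero (n k : ℕ) :
    ⟪toL2 (sineFun k * cosineFun ^ n), v⟫ = 0 := by
  induction n generalizing k with
  | zero => simpa using hv k
  | succ n ih =>
    cases k with
    | zero => simp [sineFun_zero]
    | succ k =>
      rw [pow_succ', ← mul_assoc, sineFun_succ_mul_cosineFun, smul_mul_assoc, add_mul, map_smul,
        map_add, inner_smul_left, inner_add_left, ih, ih, add_zero, mul_zero]

lemma inner_sineFun_mul_aeval_cosineFun_eq_zero (k : ℕ) (p : Polynomial ℝ) :
    ⟪toL2 (sineFun k * Polynomial.aeval cosineFun p), v⟫ = 0 := by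
  induction p using Polynomial.induction_on' with
  | add p q hp hq => rw [map_add, mul_add, map_add, inner_add_left, hp, hq, add_zero]
  | monomial n a =>
    rw [Polynomial.aeval_monomial, ← Algebra.smul_def, mul_smul_comm, map_smul, inner_smul_left,
      inner_sineFun_mul_cosineFun_pow_eq_zero hv, mul_zero]

lemma inner_sineFun_mul_eq_zero (k : ℕ) (ψ : C(ℝ, ℝ)) : ⟪toL2 (sineFun k * ψ), v⟫ = 0 := by
  refine abs_nonpos_iff.1 (le_of_forall_pos_le_add fun ε hε => ?_)
  obtain ⟨p, hp⟩ := exists_aeval_cosineFun_near ψ (div_pos hε (by positivity : 0 < ‖v‖ + 1))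
  set q := Polynomial.aeval cosineFun p
  have hnorm : ‖toL2 (sineFun k * (q - ψ))‖ ≤ ε / (‖v‖ + 1) := by
    refine norm_toL2_le (by positivity) fun x hx => ?_
    rw [ContinuousMap.mul_apply, abs_mul]
    exact (mul_le_of_le_one_left (abs_nonneg _) (abs_sineFun_le_one k x)).trans (hp x hx).le
  have hinner : ⟪toL2 (sineFun k * ψ), v⟫ = -⟪toL2 (sineFun k * (q - ψ)), v⟫ := by
    rw [mul_sub, map_sub, inner_sub_left, inner_sineFun_mul_aeval_cosineFun_eq_zero hv, zero_sub,
      neg_neg]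
  calc |⟪toL2 (sineFun k * ψ), v⟫| = |⟪toL2 (sineFun k * (q - ψ)), v⟫| := by
        rw [hinner, abs_neg]
    _ ≤ ‖toL2 (sineFun k * (q - ψ))‖ * ‖v‖ := abs_real_inner_le_norm _ _
    _ ≤ ε / (‖v‖ + 1) * (‖v‖ + 1) := by
        gcongr
        exact le_add_of_nonneg_right zero_le_one
    _ = 0 + ε := by rw [div_mul_cancel₀ ε (by positivity), zero_add]

theorem eq_zero_of_forall_inner_sineFun_eq_zero : v = 0 := by
  have hint : Integrable (fun x => sineFun 1 x * v x) μ01 := by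
    refine (integrable_coeFn_mul (toL2 (sineFun 1)) v).congr ?_
    filter_upwards [coeFn_toL2 (sineFun 1)] with x hx
    rw [hx]
  have hzero : ∀ᵐ x ∂μ01, sineFun 1 x * v x = 0 := by
    refine ae_eq_zero_of_integral_contDiff_smul_eq_zero hint.locallyIntegrable fun g hg _ => ?_
    rw [← inner_sineFun_mul_eq_zero hv 1 ⟨g, hg.continuous⟩, inner_toL2]
    exact integral_congr_ae (.of_forall fun x => by
      simp only [smul_eq_mul, ContinuousMap.mul_apply, ContinuousMap.coe_mk]
      ring)
  refine Lp.eq_zero_iff_ae_eq_zero.2 ?_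
  filter_upwards [hzero, ae_μ01_mem_Ioo] with x hx hx01
  refine (mul_eq_zero.1 hx).resolve_left (ne_of_gt ?_)
  rw [sineFun_apply, Nat.cast_one, one_mul]
  exact Real.sin_pos_of_pos_of_lt_pi (mul_pos Real.pi_pos hx01.1)
    (mul_lt_of_lt_one_right Real.pi_pos hx01.2)

end Completeness

/-! ### Sine coefficients -/

lemma inDomainA_sineFun (k : ℕ) :
    InDomainA (toL2 (sineFun k)) (-(k * Real.pi) ^ 2 • toL2 (sineFun k)) := by
  have hderiv (x : ℝ) : HasDerivAt (fun x => k * Real.pi * x) (k * Real.pi) x :=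
    hasDerivAt_const_mul _
  rw [← map_smul]
  refine inDomainA_toL2
    (φ' := ⟨fun x => Real.cos (k * Real.pi * x) * (k * Real.pi), by fun_prop⟩)
    (fun x => (hderiv x).sin) (fun x => ((hderiv x).cos.mul_const _).congr_deriv ?_)
    (by simp [sineFun_apply]) (by simp [sineFun_apply, Real.sin_nat_mul_pi])
  simp only [ContinuousMap.smul_apply, sineFun_apply, smul_eq_mul]
  ring

lemma InDomainA.inner_sineFun {v w : Hsp} (h : InDomainA v w) (k : ℕ) :
    ⟪toL2 (sineFun k), w⟫ = -(k * Real.pi) ^ 2 * ⟪toL2 (sineFun k), v⟫ := by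
  rw [(inDomainA_sineFun k).inner_comm h, inner_smul_right, real_inner_comm]

lemma inner_sineFun_of_ne {j k : ℕ} (hjk : j ≠ k) :
    ⟪toL2 (sineFun j), toL2 (sineFun k)⟫ = 0 := by
  have h := (inDomainA_sineFun k).inner_sineFun j
  rw [inner_smul_right] at h
  have hne : (k * Real.pi) ^ 2 ≠ (j * Real.pi) ^ 2 := by
    rw [Ne, sq_eq_sq₀ (by positivity) (by positivity), mul_left_inj' Real.pi_ne_zero]
    exact_mod_cast hjk.symm
  exact (mul_eq_zero.1 (by linarith : ((k * Real.pi) ^ 2 - (j * Real.pi) ^ 2) *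
    ⟪toL2 (sineFun j), toL2 (sineFun k)⟫ = 0)).resolve_left (sub_ne_zero.2 hne)

lemma inner_sineFun_self {k : ℕ} (hk : k ≠ 0) :
    ⟪toL2 (sineFun k), toL2 (sineFun k)⟫ = 1 / 2 := by
  have hkπ : k * Real.pi ≠ 0 := mul_ne_zero (Nat.cast_ne_zero.2 hk) Real.pi_ne_zero
  have hsq : ∫ x, sineFun k x * toL2 (sineFun k) x ∂μ01
      = ∫ x, Real.sin (k * Real.pi * x) ^ 2 ∂μ01 := by
    refine integral_congr_ae ((coeFn_toL2 (sineFun k)).mono fun x hx => ?_)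
    simp only [hx, sineFun_apply, sq]
  rw [inner_toL2, hsq, integral_μ01,
    intervalIntegral.integral_comp_mul_left (fun y => Real.sin y ^ 2) hkπ, integral_sin_sq,
    mul_one, Real.sin_nat_mul_pi]
  simp only [mul_zero, Real.sin_zero, zero_mul, sub_zero, zero_add, smul_eq_mul]
  field_simp

lemma norm_sineFun_le_one (k : ℕ) : ‖toL2 (sineFun k)‖ ≤ 1 :=
  norm_toL2_le zero_le_one fun x _ => abs_sineFun_le_one k x

theorem exists_continuousMap_of_summable_inner_sineFun {v : Hsp}
    (hv : Summable fun k => |⟪toL2 (sineFun k), v⟫|) : ∃ U : C(ℝ, ℝ), toL2 U = v := by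
  set c : ℕ → ℝ := fun k => 2 * ⟪toL2 (sineFun k), v⟫
  have hU : Summable fun k => c k • sineFun k := by
    refine ContinuousMap.summable_of_locally_summable_norm fun K =>
      .of_nonneg_of_le (fun _ => norm_nonneg _) (fun k => ?_) (hv.mul_left 2)
    refine (ContinuousMap.norm_le _ (by positivity)).2 fun x => ?_
    simp only [ContinuousMap.restrict_apply, ContinuousMap.smul_apply, norm_smul, c, norm_mul,
      Real.norm_eq_abs, abs_two]
    exact mul_le_of_le_one_right (by positivity) (abs_sineFun_le_one k x)
  refine ⟨∑' k, c k • sineFun k, (sub_eq_zero.1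
    (eq_zero_of_forall_inner_sineFun_eq_zero fun j => ?_)).symm⟩
  rw [inner_sub_right, sub_eq_zero]
  rcases eq_or_ne j 0 with rfl | hj
  · simp [sineFun_zero]
  have hcoeff (k : ℕ) : ⟪toL2 (sineFun j), toL2 (c k • sineFun k)⟫
      = if k = j then ⟪toL2 (sineFun j), v⟫ else 0 := by
    rw [map_smul, inner_smul_right]
    split_ifs with hkj
    · rw [hkj, inner_sineFun_self hj]
      simp only [c]
      ring
    · rw [inner_sineFun_of_ne (Ne.symm hkj), mul_zero]
  have hsum := (hU.hasSum.mapL toL2).mapL (innerSL ℝ (toL2 (sineFun j)))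
  simp only [innerSL_apply_apply, hcoeff] at hsum
  exact (hasSum_ite_eq j _).unique hsum

/-! ### Continuity in space of the solutions of the linear problem -/

/-- Grönwall's inequality for `y - M / l`, combined with `exp (-x) ≤ 1 / x`. -/
lemma le_div_of_ae_deriv_le {y : ℝ → ℝ} {a t l M C : ℝ} (hat : a < t) (hl : 0 < l) (hM : 0 ≤ M)
    (hC : 0 ≤ C) (hy : AbsolutelyContinuousOnInterval y a t) (ha : y a ≤ C)
    (hy' : ∀ᵐ s ∂volume.restrict (Ioo a t), deriv y s ≤ -l * y s + M) :
    y t ≤ (M + C / (t - a)) / l := by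
  have hlt : 0 < l * (t - a) := mul_pos hl (sub_pos.2 hat)
  have hgronwall : y t - M / l ≤ Real.exp (-l * (t - a)) * (y a - M / l) := by
    refine le_exp_mul_of_ae_deriv_le hat.le
      (hy.fun_sub contDiffOn_const.absolutelyContinuousOnInterval) ?_
    filter_upwards [hy'] with s hs
    rwa [deriv_sub_const, mul_sub, neg_mul l (M / l), mul_div_cancel₀ M hl.ne', sub_neg_eq_add]
  have hexp : Real.exp (-l * (t - a)) ≤ 1 / (l * (t - a)) := by
    rw [neg_mul, Real.exp_neg, ← one_div]
    exact one_div_le_one_div_of_le hlt (by linarith [Real.add_one_le_exp (l * (t - a))])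
  calc y t = (y t - M / l) + M / l := by ring
    _ ≤ Real.exp (-l * (t - a)) * C + M / l := by
      gcongr
      refine hgronwall.trans ?_
      gcongr
      exact (sub_le_self _ (by positivity)).trans ha
    _ ≤ 1 / (l * (t - a)) * C + M / l := by gcongr
    _ = (M + C / (t - a)) / l := by
      have hta : t - a ≠ 0 := (sub_pos.2 hat).ne'
      field_simp
      ring

namespace IsRegularCurve

variable {τ : ℝ} {z z' zxx : ℝ → Hsp}

lemma inner_le_of_eigenvector (hz : IsRegularCurve τ z z' zxx) {e : Hsp} (he1 : ‖e‖ ≤ 1)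
    {l : ℝ} (hl : 0 < l) (he : ∀ v w, InDomainA v w → ⟪e, w⟫ = -l * ⟪e, v⟫)
    {a t M : ℝ} (hτa : τ < a) (hat : a < t) (hM : 0 ≤ M)
    (hsource : ∀ᵐ s ∂volume.restrict (Ioo a t), ‖z' s - zxx s‖ ≤ M) :
    ⟪e, z t⟫ ≤ (M + ‖z a‖ / (t - a)) / l := by
  have hinner (v : Hsp) : ⟪e, v⟫ ≤ ‖v‖ :=
    (real_inner_le_norm _ _).trans (mul_le_of_le_one_left (norm_nonneg _) he1)
  have hAC : AbsolutelyContinuousOnInterval (fun s => ⟪e, z s⟫) a t := by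
    refine absolutelyContinuousOnInterval_of_dist_le (C := ‖e‖)
      (hz.absolutelyContinuousOnInterval hτa hat) fun x _ y _ => ?_
    rw [Real.dist_eq, ← inner_sub_right, dist_eq_norm]
    exact abs_real_inner_le_norm _ _
  refine le_div_of_ae_deriv_le hat hl hM (norm_nonneg _) hAC (hinner _) ?_
  have hsub : Ioo a t ⊆ Ioi τ := Ioo_subset_Ioi_self.trans (Ioi_subset_Ioi hτa.le)
  filter_upwards [hsource, ae_restrict_of_ae_restrict_of_subset hsub hz.dom,
    ae_restrict_of_ae_restrict_of_subset hsub hz.ae_hasDerivAt] with s hs hdom hderiv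
  have hderiv' : HasDerivAt (fun s => ⟪e, z s⟫) ⟪e, z' s⟫ s :=
    (innerSL ℝ e).hasFDerivAt.comp_hasDerivAt s hderiv
  have hM' := (hinner _).trans hs
  rw [inner_sub_right, he _ _ hdom] at hM'
  rw [hderiv'.deriv]
  linarith

lemma exists_continuousMap (hz : IsRegularCurve τ z z' zxx) {a t M : ℝ} (hτa : τ < a)
    (hat : a < t) (hM : 0 ≤ M)
    (hsource : ∀ᵐ s ∂volume.restrict (Ioo a t), ‖z' s - zxx s‖ ≤ M) :
    ∃ U : C(ℝ, ℝ), toL2 U = z t := by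
  set D := M + ‖z a‖ / (t - a)
  refine exists_continuousMap_of_summable_inner_sineFun (.of_nonneg_of_le
    (fun _ => abs_nonneg _) (fun k => ?_)
    ((Real.summable_one_div_nat_pow.2 one_lt_two).mul_left (D / Real.pi ^ 2)))
  have hD : D / Real.pi ^ 2 * (1 / (k : ℝ) ^ 2) = D / (k * Real.pi) ^ 2 := by
    rw [div_mul_div_comm, mul_one, mul_pow, mul_comm (Real.pi ^ 2)]
  rw [hD]
  rcases eq_or_ne k 0 with rfl | hk
  · simp [sineFun_zero]
  have hl : 0 < (k * Real.pi) ^ 2 := by positivity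
  refine abs_le'.2 ⟨?_, ?_⟩
  · exact hz.inner_le_of_eigenvector (norm_sineFun_le_one k) hl
      (fun v w h => h.inner_sineFun k) hτa hat hM hsource
  · rw [← inner_neg_left]
    refine hz.inner_le_of_eigenvector (by simpa using norm_sineFun_le_one k) hl
      (fun v w h => ?_) hτa hat hM hsource
    rw [inner_neg_left, inner_neg_left, h.inner_sineFun k, mul_neg]

end IsRegularCurve

/-! ### The linear problem -/

namespace IsLinearSolutionWith

variable {b ω : ℝ → ℝ} {τ : ℝ} {u u' uxx w w' wxx : ℝ → Hsp}

lemma ae_sub_eq (hu : IsLinearSolutionWith b ω τ u u' uxx) :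
    ∀ᵐ t ∂volume.restrict (Ioi τ), u' t - uxx t = b t • toL2 1 + ω t • u t := by
  filter_upwards [hu.eq] with t ht
  refine Lp.ext ?_
  filter_upwards [ht, coeFn_toL2 1, Lp.coeFn_sub (u' t) (uxx t),
    Lp.coeFn_add (b t • toL2 1) (ω t • u t), Lp.coeFn_smul (b t) (toL2 1),
    Lp.coeFn_smul (ω t) (u t)] with x hx hone hsub hadd hb hω
  simp only [hsub, hadd, Pi.sub_apply, Pi.add_apply, hb, hω, Pi.smul_apply, smul_eq_mul, hx, hone,
    ContinuousMap.one_apply]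
  ring

theorem exists_continuousMap (hu : IsLinearSolutionWith b ω τ u u' uxx) (hb : Continuous b)
    (hω : Continuous ω) {t : ℝ} (ht : τ < t) : ∃ U : C(ℝ, ℝ), toL2 U = u t := by
  obtain ⟨a, hτa, hat⟩ := exists_between ht
  have hcont : ContinuousOn (fun s => b s • toL2 1 + ω s • u s) (Icc a t) :=
    (hb.continuousOn.smul continuousOn_const).add
      (hω.continuousOn.smul (hu.cont.mono (Icc_subset_Ici_iff hat.le |>.2 hτa.le)))
  obtain ⟨M, hM⟩ := isCompact_Icc.exists_bound_of_continuousOn hcont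
  refine hu.isRegularCurve.exists_continuousMap hτa hat
    ((norm_nonneg _).trans (hM a (left_mem_Icc.2 hat.le))) ?_
  filter_upwards [ae_restrict_of_ae_restrict_of_subset
    (Ioo_subset_Ioi_self.trans (Ioi_subset_Ioi hτa.le)) hu.ae_sub_eq,
    ae_restrict_mem measurableSet_Ioo] with s hs hsI
  rw [hs]
  exact hM s (Ioo_subset_Icc_self hsI)

lemma le_of_le (hu : IsLinearSolutionWith b ω τ u u' uxx)
    (hw : IsLinearSolutionWith b ω τ w w' wxx) (hω : Continuous ω) (h0 : u τ ≤ w τ) {T : ℝ}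
    (hT : τ ≤ T) : u T ≤ w T := by
  obtain ⟨K, hK⟩ := (isCompact_Icc (a := τ) (b := T)).bddAbove_image hω.continuousOn
  refine sub_nonneg.1 ((hw.isRegularCurve.sub hu.isRegularCurve).nonneg_of_supersolution
    (K := K) hT ?_ (sub_nonneg.2 h0))
  have hsub : Ioo τ T ⊆ Ioi τ := Ioo_subset_Ioi_self
  filter_upwards [ae_restrict_of_ae_restrict_of_subset hsub hu.eq,
    ae_restrict_of_ae_restrict_of_subset hsub hw.eq, ae_restrict_mem measurableSet_Ioo]
    with t hut hwt ht
  filter_upwards [hut, hwt, Lp.coeFn_sub (w t) (u t), Lp.coeFn_sub (w' t) (u' t),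
    Lp.coeFn_sub (wxx t) (uxx t)] with x hux hwx hsub hsub' hsubxx
  simp only [Pi.sub_apply, hsub, hsub', hsubxx, hux, hwx]
  intro hneg
  have hωK : ω t ≤ K := hK (mem_image_of_mem ω (Ioo_subset_Icc_self ht))
  linarith [mul_le_mul_of_nonpos_right hωK hneg.le]

end IsLinearSolutionWith

theorem IsLinearSolution.unique {b ω : ℝ → ℝ} {τ : ℝ} {u w : ℝ → Hsp} (hω : Continuous ω)
    (hu : IsLinearSolution b ω τ u) (hw : IsLinearSolution b ω τ w) (h0 : u τ = w τ) {t : ℝ}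
    (ht : τ ≤ t) : u t = w t := by
  obtain ⟨u', uxx, hu⟩ := hu
  obtain ⟨w', wxx, hw⟩ := hw
  exact le_antisymm (hu.le_of_le hw hω h0.le ht) (hw.le_of_le hu hω h0.ge ht)

/-! ### Departure from the zero solution -/

lemma eq_const_or_exists_departure {α X : Type*} [ConditionallyCompleteLinearOrder α]
    [TopologicalSpace α] [OrderTopology α] [DenselyOrdered α] [TopologicalSpace X] [T1Space X]
    {u : α → X} {τ : α} {c : X} (hu : ContinuousOn u (Ici τ)) (hτ : u τ = c) :
    (∀ t, τ ≤ t → u t = c) ∨ ∃ t₀, τ ≤ t₀ ∧ (∀ t ∈ Icc τ t₀, u t = c) ∧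
      ∀ t, t₀ < t → ∃ s ∈ Ioo t₀ t, u s ≠ c := by
  by_contra! h
  obtain ⟨⟨t₁, ht₁⟩, h⟩ := h
  set S : Set α := {t | τ ≤ t ∧ u t ≠ c}
  have hS : BddBelow S := ⟨τ, fun t ht => ht.1⟩
  have hτS : τ ≤ sInf S := le_csInf ⟨t₁, ht₁⟩ fun t ht => ht.1
  have hIco : Ico τ (sInf S) ⊆ Ici τ ∩ u ⁻¹' {c} := fun t ht =>
    ⟨ht.1, not_not.1 fun hne => notMem_of_lt_csInf ht.2 hS ⟨ht.1, hne⟩⟩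
  have hIcc : ∀ t ∈ Icc τ (sInf S), u t = c := by
    rcases hτS.eq_or_lt with heq | hlt
    · rw [← heq, Icc_self]
      rintro t rfl
      exact hτ
    · rw [← closure_Ico hlt.ne]
      exact fun t ht => (closure_minimal hIco
        (hu.preimage_isClosed_of_isClosed isClosed_Ici isClosed_singleton) ht).2
  obtain ⟨t, ht, hconst⟩ := h _ hτS hIcc
  obtain ⟨s, hs, hst⟩ := exists_lt_of_csInf_lt ⟨t₁, ht₁⟩ ht
  have hne : sInf S ≠ s := fun heq => hs.2 (hIcc s ⟨hs.1, heq.ge⟩)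
  exact hs.2 (hconst s ⟨(csInf_le hS hs).lt_of_ne hne, hst⟩)

namespace IsStrongSolutionWith

variable {b ω : ℝ → ℝ} {τ t₀ : ℝ} {u r u' uxx : ℝ → Hsp}

theorem isLinearSolutionWith (h : IsStrongSolutionWith b ω τ u r u' uxx) (hu : NonnegOn u τ)
    (hb : ∀ t, 0 ≤ b t) (hω : Continuous ω) (hτ : τ ≤ t₀)
    (hne : ∀ t, t₀ < t → ∃ s ∈ Ioo t₀ t, u s ≠ 0) : IsLinearSolutionWith b ω t₀ u u' uxx := by
  have hreg := h.isRegularCurve.mono hτ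
  refine ⟨hreg.cont, hreg.dom, ?_, hreg.fund⟩
  filter_upwards [hreg.dom, ae_restrict_of_ae_restrict_of_subset (Ioi_subset_Ioi hτ)
    (h.ae_eq_of_nonneg hu), ae_restrict_mem measurableSet_Ioi] with t hdom heq ht
  obtain ⟨f, hf, -, -, hfu, -⟩ := hdom
  obtain ⟨s, hs, hs0⟩ := hne t ht
  have hpos := h.pos_of_ne_zero hu hb hω (hτ.trans hs.1.le) hs.2 hs0
    (hf.mono Ioo_subset_Icc_self) hfu
  filter_upwards [heq, hfu, ae_μ01_mem_Ioo] with x hx hfx hx01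
  rw [hx, if_pos (hfx ▸ hpos x hx01)]

theorem isPositive (h : IsStrongSolutionWith b ω τ u r u' uxx) (hu : NonnegOn u τ)
    (hb : Continuous b) (hb0 : ∀ t, 0 ≤ b t) (hω : Continuous ω) (hτ : τ ≤ t₀)
    (hne : ∀ t, t₀ < t → ∃ s ∈ Ioo t₀ t, u s ≠ 0) {t : ℝ} (ht : t₀ < t) : IsPositive (u t) := by
  obtain ⟨U, hU⟩ := (h.isLinearSolutionWith hu hb0 hω hτ hne).exists_continuousMap hb hω ht
  obtain ⟨s, hs, hs0⟩ := hne t ht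
  have hUu : ∀ᵐ x ∂μ01, U x = u t x := by
    rw [← hU]
    exact (coeFn_toL2 U).mono fun x hx => hx.symm
  exact ⟨U, U.continuous.continuousOn, hUu,
    h.pos_of_ne_zero hu hb0 hω (hτ.trans hs.1.le) hs.2 hs0 U.continuous.continuousOn hUu⟩

end IsStrongSolutionWith

theorem statement2_general {b ω : ℝ → ℝ} {τ : ℝ} {u : ℝ → Hsp} (hb : Continuous b)
    (hb0 : ∀ t, 0 ≤ b t) (hω : Continuous ω) (hsol : IsStrongSolution b ω τ u) (hinit : u τ = 0)
    (hnneg : NonnegOn u τ) :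
    (∀ t, τ ≤ t → u t = 0) ∨
    ∃ t₀, τ ≤ t₀ ∧
      (∀ t ∈ Icc τ t₀, u t = 0) ∧
      IsLinearSolution b ω t₀ u ∧
      (∀ w : ℝ → Hsp, IsLinearSolution b ω t₀ w → w t₀ = 0 →
        ∀ t, t₀ ≤ t → w t = u t) ∧
      ∀ t, t₀ < t → IsPositive (u t) := by
  obtain ⟨r, u', uxx, hu⟩ := hsol
  refine (eq_const_or_exists_departure hu.cont hinit).imp_right ?_
  rintro ⟨t₀, hτ, hzero, hne⟩
  have hlin : IsLinearSolution b ω t₀ u :=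
    ⟨u', uxx, hu.isLinearSolutionWith hnneg hb0 hω hτ hne⟩
  have hut₀ : u t₀ = 0 := hzero t₀ (right_mem_Icc.2 hτ)
  exact ⟨t₀, hτ, hzero, hlin, fun w hw hw0 t ht => hw.unique hω hlin (hw0.trans hut₀.symm) ht,
    fun t ht => hu.isPositive hnneg hb hb0 hω hτ hne ht⟩

/-- if `u_τ ≡ 0`, then apart from the zero solution, every
non-negative strong solution of the inclusion is zero up to some time `t₀ ≥ τ` and,
from `t₀` onwards, coincides with the unique solution of the linear problem
`∂u/∂t − ∂²u/∂x² = b(t) + ω(t)u` with datum `0` at `t₀`; moreover it is positive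
for every `t > t₀`. -/
theorem statement2
    (b ω : ℝ → ℝ) (b0 b1 ω0 ω1 τ : ℝ) (hC : Cond1 b ω b0 b1 ω0 ω1)
    (u : ℝ → Hsp)
    (hsol : IsStrongSolution b ω τ u) (hinit : u τ = 0) (hnneg : NonnegOn u τ) :
    (∀ t, τ ≤ t → u t = 0) ∨
    ∃ t₀, τ ≤ t₀ ∧
      (∀ t ∈ Icc τ t₀, u t = 0) ∧
      IsLinearSolution b ω t₀ u ∧
      (∀ w : ℝ → Hsp, IsLinearSolution b ω t₀ w → w t₀ = 0 →
        ∀ t, t₀ ≤ t → w t = u t) ∧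
      ∀ t, t₀ < t → IsPositive (u t) :=
  statement2_general hC.contb (fun t => hC.b0pos.le.trans (hC.blb t)) hC.contω hsol hinit hnneg

end
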